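/- Fix integers n > k ≥ 2 and set δ = k(n−k), N = binomial(n,k), and b_2(k,n) = (N^2 − 5N + 4)/2 − Nδ(δ − n − 3)/(2(δ + n + 1)) − (n−1)(N−n) − (n^2 − 3n + 2)/2. Then, as q → ∞ through prime powers, C_{n,k}(q)/|PGL_k(F_q)| = q^{δ−n+1} − (N−n)q^{δ−n} + b_2(k,n)·q^{δ−n−1} + O(q^{δ−n−2}); that is, the quantity C_{n,k}(q)/|PGL_k(F_q)| − (q^{δ−n+1} − (N−n)q^{δ−n} + b_2(k,n)q^{δ−n−1}) is bounded in absolute value by a constant times q^{δ−n−2} for all sufficiently large prime powers q. -/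

import Mathlib

open scoped LinearAlgebra.Projectivization

/-- An ordered `n`-arc in `ℙ^{k-1}(F_q)`: an injective function from `{1,…,n}` to
`ℙ^{k-1}(F_q)` such that any `k` of its points are in general position. -/
def IsArc (F : Type) [Field F] (n k : ℕ) (σ : Fin n → ℙ F (Fin k → F)) : Prop :=
  Function.Injective σ ∧
    ∀ s : Finset (Fin n), s.card = k →
      Module.finrank F ↥(⨆ i ∈ s, (σ i).submodule) = k

/-!
Lifting the points of an arc to vectors identifies ordered `n`-arcs, up to scaling each vector,
with the `n`-tuples in `F_q^k` all of whose `k`-subsets are independent. Hence the number of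
projective classes is `q^(δ - n + 1)` times `P / (g (1 - q⁻¹)^(n - 1))`, where `P` is the
probability that a uniformly random `n`-tuple has this property and `g` the probability that a
random `k`-tuple is independent.

To expand `P` in powers of `q⁻¹`, let `D_m` be the family of dependent `m`-subsets. The events
that matter are: a given `k`-set is dependent (probability `q⁻¹ + q⁻² + O(q⁻³)`); a given
`(k - 1)`-set is dependent, a given `(k + 1)`-set spans a proper subspace, or two given `k`-sets
that meet in at most `k - 2` points are both dependent (each of probability `q⁻² + O(q⁻³)`).
Outside an event of probability `O(q⁻³)` the family `D_k` is empty, a single set, two sets that meet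
in at most `k - 2` points, all `k`-subsets of a `(k + 1)`-set, or all `k`-supersets of the only
member of `D_{k-1}`. In each of these cases a linear combination of four counts
(`secondOrderEstimate`) is exactly the indicator of `D_k = ∅`, so that its expectation is the
required expansion.
-/

namespace Kaipa

open Finset Function Module
open scoped BigOperators

section Probability

variable {Ω : Type*} [Fintype Ω]

open Classical in
/-- The probability of the event `p` for a uniformly distributed random element of the finite
type `Ω` (equal to `0` when `Ω` is empty). -/
noncomputable def prob (p : Ω → Prop) : ℝ := 𝔼 ω, if p ω then 1 else 0

variable {p r : Ω → Prop}

theorem prob_congr (h : ∀ ω, p ω ↔ r ω) : prob p = prob r :=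
  congrArg prob (funext fun ω => propext (h ω))

theorem prob_eq_card_div (p : Ω → Prop) :
    prob p = (Nat.card {ω // p ω} : ℝ) / Nat.card Ω := by
  classical
  rw [prob, Fintype.expect_eq_sum_div_card, sum_boole, Nat.card_eq_fintype_card,
    Nat.card_eq_fintype_card, Fintype.card_subtype]

theorem prob_mono (h : ∀ ω, p ω → r ω) : prob p ≤ prob r :=
  expect_le_expect fun ω _ => by split_ifs <;> grind

theorem prob_nonneg (p : Ω → Prop) : 0 ≤ prob p :=
  expect_nonneg fun ω _ => by split_ifs <;> norm_num

theorem prob_true [Nonempty Ω] : prob (fun _ : Ω => True) = 1 := by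
  simp [prob]

theorem prob_false : prob (fun _ : Ω => False) = 0 := by
  simp [prob]

theorem prob_le_one [Nonempty Ω] (p : Ω → Prop) : prob p ≤ 1 :=
  (prob_mono fun _ _ => trivial).trans_eq prob_true

theorem prob_or_le (p r : Ω → Prop) : prob (fun ω => p ω ∨ r ω) ≤ prob p + prob r := by
  rw [prob, prob, prob, ← expect_add_distrib]
  exact expect_le_expect fun ω _ => by split_ifs <;> grind

theorem prob_and_add_prob_and_not (p r : Ω → Prop) :
    prob (fun ω => p ω ∧ r ω) + prob (fun ω => p ω ∧ ¬ r ω) = prob p := by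
  rw [prob, prob, prob, ← expect_add_distrib]
  exact expect_congr rfl fun ω _ => by split_ifs <;> grind

theorem prob_not [Nonempty Ω] (p : Ω → Prop) : prob (fun ω => ¬ p ω) = 1 - prob p := by
  have h := prob_and_add_prob_and_not (fun _ => True) p
  simp only [true_and, prob_true] at h
  linarith

theorem prob_exists_mem_le {κ : Type*} (s : Finset κ) (p : κ → Ω → Prop) :
    prob (fun ω => ∃ a ∈ s, p a ω) ≤ ∑ a ∈ s, prob (p a) := by
  classical
  induction s using Finset.induction_on with
  | empty => simp [prob_false]
  | insert a s ha ih =>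
    simp only [exists_mem_insert, sum_insert ha]
    exact (prob_or_le _ _).trans (by gcongr)

theorem prob_exists_and_le {κ : Type*} [Fintype κ] {c : κ → Prop} {p : κ → Ω → Prop} {b : ℝ}
    (hb : 0 ≤ b) (h : ∀ a, c a → prob (p a) ≤ b) :
    prob (fun ω => ∃ a, c a ∧ p a ω) ≤ Fintype.card κ * b := by
  classical
  have hsum := (prob_exists_mem_le {a | c a} p).trans
    (sum_le_card_nsmul _ _ b fun a ha => h a (mem_filter.1 ha).2)
  simp only [mem_filter, mem_univ, true_and, nsmul_eq_mul] at hsum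
  exact hsum.trans (by gcongr; exact card_le_univ _)

theorem expect_card_filter {κ : Type*} (s : Finset κ) (p : Ω → κ → Prop)
    [∀ ω, DecidablePred (p ω)] :
    𝔼 ω, (#{a ∈ s | p ω a} : ℝ) = ∑ a ∈ s, prob fun ω => p ω a := by
  simp only [prob, card_filter, Nat.cast_sum, Nat.cast_ite, Nat.cast_one, Nat.cast_zero]
  rw [expect_sum_comm]
  exact sum_congr rfl fun a _ => expect_congr rfl fun ω _ => by congr

theorem abs_prob_sub_le [Nonempty Ω] {b : ℝ} (hb : 0 ≤ b)
    (h : prob (fun ω => r ω ∧ p ω) = prob r * b) :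
    |prob p - b| ≤ prob (fun ω => ¬ r ω) * b + prob fun ω => ¬ r ω ∧ p ω := by
  have hsplit := prob_and_add_prob_and_not p r
  simp only [and_comm (a := p _), h] at hsplit
  have hnot := prob_not r
  have hmul : 0 ≤ prob (fun ω => ¬ r ω) * b := mul_nonneg (prob_nonneg _) hb
  have hrest := prob_nonneg fun ω => ¬ r ω ∧ p ω
  have hdiff : prob p - b = prob (fun ω => ¬ r ω ∧ p ω) - prob (fun ω => ¬ r ω) * b := by
    rw [hnot]
    linarith
  rw [hdiff, abs_le]
  constructor <;> linarith

end Probability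

section Resampling

variable {ι V : Type*} [Fintype ι] [DecidableEq ι] [Fintype V]

theorem expect_update (j : ι) (f : (ι → V) → ℝ) :
    𝔼 v, 𝔼 x, f (update v j x) = 𝔼 v, f v := by
  let swap : (ι → V) × V ≃ (ι → V) × V :=
    { toFun := fun p => (update p.1 j p.2, p.1 j)
      invFun := fun p => (update p.1 j p.2, p.1 j)
      left_inv := fun p => by simp
      right_inv := fun p => by simp }
  cases isEmpty_or_nonempty V with
  | inl _ =>
    have : IsEmpty (ι → V) := ⟨fun v => IsEmpty.false (v j)⟩
    simp
  | inr _ =>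
    calc 𝔼 v, 𝔼 x, f (update v j x) = 𝔼 p : (ι → V) × V, f (swap p).1 :=
          (expect_product univ univ fun p => f (swap p).1).symm
      _ = 𝔼 p : (ι → V) × V, f p.1 := Fintype.expect_equiv swap _ _ fun _ => rfl
      _ = 𝔼 v, 𝔼 _x : V, f v := expect_product univ univ fun p => f p.1
      _ = 𝔼 v, f v := by simp only [Fintype.expect_const]

open Classical in
theorem prob_and_resample (j : ι) {A : (ι → V) → Prop} {B : (ι → V) → V → Prop}
    (hA : ∀ v x, A (update v j x) ↔ A v) (hB : ∀ v x, B (update v j x) = B v) :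
    prob (fun v => A v ∧ B v (v j)) = 𝔼 v, if A v then prob (B v) else 0 := by
  rw [prob, ← expect_update j]
  refine expect_congr rfl fun v _ => ?_
  simp only [hA, hB, update_self]
  split_ifs with h <;> simp [h, prob]

theorem prob_and_eq_mul (j : ι) {A : (ι → V) → Prop} {B : (ι → V) → V → Prop} {c : ℝ}
    (hA : ∀ v x, A (update v j x) ↔ A v) (hB : ∀ v x, B (update v j x) = B v)
    (hc : ∀ v, A v → prob (B v) = c) :
    prob (fun v => A v ∧ B v (v j)) = prob A * c := by
  classical
  rw [prob_and_resample j hA hB, prob, expect_mul]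
  refine expect_congr rfl fun v _ => ?_
  split_ifs with h
  · rw [hc v h, one_mul]
  · rw [zero_mul]

theorem prob_and_le_mul (j : ι) {A : (ι → V) → Prop} {B : (ι → V) → V → Prop} {c : ℝ}
    (hA : ∀ v x, A (update v j x) ↔ A v) (hB : ∀ v x, B (update v j x) = B v)
    (hc : ∀ v, A v → prob (B v) ≤ c) :
    prob (fun v => A v ∧ B v (v j)) ≤ prob A * c := by
  classical
  rw [prob_and_resample j hA hB, prob, expect_mul]
  refine expect_le_expect fun v _ => ?_
  split_ifs with h
  · rw [one_mul]
    exact hc v h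
  · rw [zero_mul]

end Resampling

section LinearAlgebra

variable {F V ι : Type*} [Field F] [AddCommGroup V] [Module F V]

theorem finrank_span_image {v : ι → V} {S : Finset ι} (h : LinearIndepOn F v S) :
    finrank F (Submodule.span F (v '' S)) = #S := by
  rw [Set.image_eq_range]
  simpa using finrank_span_eq_card h

theorem linearIndepOn_iff_finrank_span_image {v : ι → V} {S : Finset ι} :
    LinearIndepOn F v S ↔ finrank F (Submodule.span F (v '' S)) = #S := by
  refine ⟨finrank_span_image, fun h => ?_⟩
  rw [LinearIndepOn, linearIndependent_iff_card_eq_finrank_span, Set.finrank,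
    ← Set.image_eq_range, h]
  simp

theorem mem_span_image (v : ι → V) {i : ι} {S : Finset ι} (hi : i ∈ S) :
    v i ∈ Submodule.span F (v '' S) :=
  Submodule.subset_span (Set.mem_image_of_mem v hi)

theorem not_linearIndepOn_of_forall_mem_span {v : ι → V} {R S : Finset ι} (hcard : #R < #S)
    (hS : ∀ i ∈ S, v i ∈ Submodule.span F (v '' R)) : ¬ LinearIndepOn F v S := by
  classical
  intro hind
  have hfin := FiniteDimensional.span_of_finite F (R.finite_toSet.image v)
  have hspan : Submodule.span F (v '' S) ≤ Submodule.span F (v '' R) :=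
    Submodule.span_le.2 (by rintro _ ⟨i, hi, rfl⟩; exact hS i hi)
  have hrank : finrank F (Submodule.span F (v '' R)) ≤ #R := by
    rw [← coe_image]
    exact (finrank_span_finset_le_card (R := F) (R.image v)).trans card_image_le
  have := Submodule.finrank_mono hspan
  rw [finrank_span_image hind] at this
  omega

theorem forall_not_linearIndepOn_iff {v : ι → V} {R W : Finset ι} (hRW : R ⊆ W)
    (hR : LinearIndepOn F v R) :
    (∀ S ∈ powersetCard (#R + 1) W, ¬ LinearIndepOn F v S) ↔
      ∀ i ∈ W, v i ∈ Submodule.span F (v '' R) := by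
  classical
  refine ⟨fun h i hi => ?_, fun h S hS => ?_⟩
  · by_cases hiR : i ∈ R
    · exact mem_span_image v hiR
    · have hdep := h (insert i R)
        (mem_powersetCard.2 ⟨insert_subset hi hRW, card_insert_of_notMem hiR⟩)
      rw [coe_insert, linearIndepOn_insert (by simpa using hiR)] at hdep
      exact not_not.1 fun hv => hdep ⟨hR, hv⟩
  · obtain ⟨hSW, hcard⟩ := mem_powersetCard.1 hS
    exact not_linearIndepOn_of_forall_mem_span (by omega) fun i hi => h i (hSW hi)

variable [DecidableEq ι]

theorem linearIndepOn_update_iff {j : ι} {S : Finset ι} (hj : j ∉ S) (v : ι → V) (x : V) :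
    LinearIndepOn F (update v j x) S ↔ LinearIndepOn F v S :=
  linearIndepOn_congr fun i hi => update_of_ne (by rintro rfl; exact hj hi) x v

theorem span_image_update {j : ι} {S : Finset ι} (hj : j ∉ S) (v : ι → V) (x : V) :
    Submodule.span F (update v j x '' S) = Submodule.span F (v '' S) :=
  congrArg _ (Set.image_congr fun i hi => update_of_ne (by rintro rfl; exact hj hi) x v)

theorem linearIndepOn_iff_erase {j : ι} {S : Finset ι} (hj : j ∈ S) (v : ι → V) :
    LinearIndepOn F v S ↔
      LinearIndepOn F v (S.erase j) ∧ v j ∉ Submodule.span F (v '' ↑(S.erase j)) := by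
  rw [← linearIndepOn_insert (by simp), ← coe_insert, insert_erase hj]

end LinearAlgebra

section RandomVectors

/-- The inverse `1 / q` of the number `q` of elements of a finite field, which is the parameter of
all expansions below. -/
noncomputable def invCard (F : Type*) [Fintype F] : ℝ := (Fintype.card F : ℝ)⁻¹

variable {F V ι : Type*} [Field F] [Fintype F]

theorem invCard_pos : 0 < invCard F := by
  unfold invCard
  positivity

theorem invCard_lt_one : invCard F < 1 :=
  inv_lt_one_of_one_lt₀ (by exact_mod_cast Fintype.one_lt_card)

variable [AddCommGroup V] [Module F V] [Fintype V]

theorem prob_mem_submodule (W : Submodule F V) {d : ℕ} (h : finrank F W + d = finrank F V) :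
    prob (fun x => x ∈ W) = invCard F ^ d := by
  have hW : Nat.card {x // x ∈ W} = Nat.card F ^ finrank F W := natCard_eq_pow_finrank
  rw [prob_eq_card_div, hW, natCard_eq_pow_finrank (K := F) (V := V), ← h, invCard,
    Nat.card_eq_fintype_card]
  push_cast
  rw [pow_add, inv_pow]
  field_simp

theorem prob_mem_submodule_le (W : Submodule F V) {d : ℕ}
    (h : finrank F W + d ≤ finrank F V) : prob (fun x => x ∈ W) ≤ invCard F ^ d := by
  rw [prob_mem_submodule W (Nat.add_sub_of_le (le_of_add_le_left h))]
  exact pow_le_pow_of_le_one invCard_pos.le invCard_lt_one.le (by omega)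

variable [Fintype ι] [DecidableEq ι]

theorem prob_and_not_linearIndepOn_of_erase {j : ι} {S : Finset ι} (hj : j ∈ S) {d : ℕ}
    (hd : #S + d = finrank F V + 1) {A : (ι → V) → Prop}
    (hA : ∀ v x, A (update v j x) ↔ A v) :
    prob (fun v => (A v ∧ LinearIndepOn F v (S.erase j)) ∧ ¬ LinearIndepOn F v S) =
      prob (fun v => A v ∧ LinearIndepOn F v (S.erase j)) * invCard F ^ d := by
  have hnot := notMem_erase j S
  have hcard := card_erase_add_one hj
  rw [← prob_and_eq_mul j (A := fun v => A v ∧ LinearIndepOn F v (S.erase j))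
    (B := fun v x => x ∈ Submodule.span F (v '' ↑(S.erase j)))]
  · exact prob_congr fun v => and_congr_right fun h => by
      rw [linearIndepOn_iff_erase hj, not_and_not_right]
      exact imp_iff_right h.2
  · intro v x
    rw [hA, linearIndepOn_update_iff hnot]
  · intro v x
    rw [span_image_update hnot]
  · rintro v ⟨-, h⟩
    exact prob_mem_submodule _ (by rw [finrank_span_image h]; omega)

theorem prob_and_not_linearIndepOn_le {j : ι} {S : Finset ι} (hj : j ∈ S) {d : ℕ}
    (hd : #S + d = finrank F V + 1) {A : (ι → V) → Prop}
    (hA : ∀ v x, A (update v j x) ↔ A v) :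
    prob (fun v => A v ∧ ¬ LinearIndepOn F v S) ≤
      prob (fun v : ι → V => ¬ LinearIndepOn F v (S.erase j)) + prob A * invCard F ^ d := by
  have ht := invCard_pos (F := F)
  calc prob (fun v => A v ∧ ¬ LinearIndepOn F v S)
      ≤ prob (fun v : ι → V => ¬ LinearIndepOn F v (S.erase j) ∨
          ((A v ∧ LinearIndepOn F v (S.erase j)) ∧ ¬ LinearIndepOn F v S)) :=
        prob_mono fun v => by tauto
    _ ≤ prob (fun v : ι → V => ¬ LinearIndepOn F v (S.erase j)) +
          prob (fun v => A v ∧ LinearIndepOn F v (S.erase j)) * invCard F ^ d := by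
        rw [← prob_and_not_linearIndepOn_of_erase hj hd hA]
        exact prob_or_le _ _
    _ ≤ _ := by
        gcongr
        exact prob_mono fun v h => h.1

theorem prob_linearIndepOn_eq_mul {j : ι} {S : Finset ι} (hj : j ∈ S) {d : ℕ}
    (hd : #S + d = finrank F V + 1) :
    prob (fun v : ι → V => LinearIndepOn F v S) =
      prob (fun v : ι → V => LinearIndepOn F v (S.erase j)) * (1 - invCard F ^ d) := by
  have h := prob_and_not_linearIndepOn_of_erase (V := V) hj hd (A := fun _ => True) (by simp)
  have hsplit := prob_and_add_prob_and_not (fun v : ι → V => LinearIndepOn F v (S.erase j))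
    fun v => LinearIndepOn F v S
  have hand : prob (fun v : ι → V => LinearIndepOn F v (S.erase j) ∧ LinearIndepOn F v S) =
      prob (fun v : ι → V => LinearIndepOn F v S) :=
    prob_congr fun v => and_iff_right_of_imp fun hv => ((linearIndepOn_iff_erase hj v).1 hv).1
  simp only [true_and] at h
  rw [hand] at hsplit
  linarith

theorem prob_not_linearIndepOn_le_card_mul (S : Finset ι) {d : ℕ}
    (hd : #S + d = finrank F V + 1) :
    prob (fun v : ι → V => ¬ LinearIndepOn F v S) ≤ #S * invCard F ^ d := by
  have ht := invCard_pos (F := F)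
  induction S using Finset.induction_on generalizing d with
  | empty => simp [prob_false]
  | insert j R hj ih =>
    have hstep := prob_and_not_linearIndepOn_le (V := V) (mem_insert_self j R) hd
      (A := fun _ => True) (by simp)
    simp only [true_and, erase_insert hj, prob_true, one_mul] at hstep
    rw [card_insert_of_notMem hj] at hd ⊢
    calc _ ≤ _ := hstep
      _ ≤ #R * invCard F ^ (d + 1) + invCard F ^ d := by
          gcongr
          exact ih (by omega)
      _ ≤ #R * invCard F ^ d + invCard F ^ d := by
          gcongr _ * ?_ + _
          exact pow_le_pow_of_le_one ht.le invCard_lt_one.le d.le_succ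
      _ = _ := by push_cast; ring

theorem prob_not_linearIndepOn_le (S : Finset ι) {d : ℕ} (hS : #S + d = finrank F V + 1)
    (hd : 1 ≤ d) :
    prob (fun v : ι → V => ¬ LinearIndepOn F v S) ≤ finrank F V * invCard F ^ d := by
  have ht := invCard_pos (F := F)
  refine (prob_not_linearIndepOn_le_card_mul S hS).trans ?_
  gcongr
  omega

theorem prob_not_and_not_linearIndepOn_le {S T : Finset ι} (hS : #S = finrank F V) {d : ℕ}
    (hT : #T + d = finrank F V + 1) (hd : 1 ≤ d) (hTS : ¬ T ⊆ S) :
    prob (fun v : ι → V => ¬ LinearIndepOn F v S ∧ ¬ LinearIndepOn F v T) ≤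
      2 * finrank F V * invCard F ^ (d + 1) := by
  obtain ⟨j, hjT, hjS⟩ := not_subset.1 hTS
  have hcard := card_erase_add_one hjT
  have ht := invCard_pos (F := F)
  calc _ ≤ _ := prob_and_not_linearIndepOn_le hjT hT fun v x => by
          rw [linearIndepOn_update_iff hjS]
    _ ≤ finrank F V * invCard F ^ (d + 1) + finrank F V * invCard F ^ 1 * invCard F ^ d := by
          gcongr
          · exact prob_not_linearIndepOn_le _ (by omega) (by omega)
          · exact prob_not_linearIndepOn_le _ (by omega) le_rfl
    _ = _ := by ring

theorem prob_linearIndepOn_and_forall_mem_span {R J : Finset ι} (hRJ : Disjoint R J) {d : ℕ}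
    (hR : #R + d = finrank F V) :
    prob (fun v : ι → V => LinearIndepOn F v R ∧ ∀ i ∈ J, v i ∈ Submodule.span F (v '' R)) =
      prob (fun v : ι → V => LinearIndepOn F v R) * (invCard F ^ d) ^ #J := by
  induction J using Finset.induction_on with
  | empty => simp
  | insert j J hj ih =>
    rw [disjoint_insert_right] at hRJ
    rw [card_insert_of_notMem hj, pow_succ, ← mul_assoc, ← ih hRJ.2,
      ← prob_and_eq_mul j (B := fun v x => x ∈ Submodule.span F (v '' R))]
    · refine prob_congr fun v => ?_
      simp only [forall_mem_insert]
      tauto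
    · intro v x
      rw [linearIndepOn_update_iff hRJ.1, span_image_update hRJ.1]
      refine and_congr_right fun _ => forall₂_congr fun i hi => ?_
      rw [update_of_ne (by rintro rfl; exact hj hi)]
    · intro v x
      rw [span_image_update hRJ.1]
    · rintro v ⟨h, -⟩
      exact prob_mem_submodule _ (by rw [finrank_span_image h, hR])

theorem prob_and_mem_span_inf_le {R T : Finset ι} {j : ι} (hjR : j ∉ R) (hjT : j ∉ T)
    (hR : #R + 1 = finrank F V) (hT : #T + 1 = finrank F V) {A : (ι → V) → Prop}
    (hA : ∀ v x, A (update v j x) ↔ A v)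
    (hind : ∀ v, A v → LinearIndepOn F v R ∧ LinearIndepOn F v T ∧
      Submodule.span F (v '' R) ≠ Submodule.span F (v '' T)) :
    prob (fun v => A v ∧ v j ∈ Submodule.span F (v '' R) ⊓ Submodule.span F (v '' T)) ≤
      prob A * invCard F ^ 2 := by
  refine prob_and_le_mul j (B := fun v x =>
    x ∈ Submodule.span F (v '' R) ⊓ Submodule.span F (v '' T)) hA ?_ fun v hv => ?_
  · intro v x
    rw [span_image_update hjR, span_image_update hjT]
  · obtain ⟨hindR, hindT, hne⟩ := hind v hv
    have hrankR := finrank_span_image hindR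
    have hrankT := finrank_span_image hindT
    have hlt : Submodule.span F (v '' R) ⊓ Submodule.span F (v '' T) < Submodule.span F (v '' R) :=
      inf_lt_left.2 fun hle => hne (Submodule.eq_of_le_of_finrank_eq hle (by omega))
    have := Submodule.finrank_lt_finrank_of_lt hlt
    exact prob_mem_submodule_le _ (by omega)

-- If the two hyperplanes coincide, then they contain `v i` for all `i ∈ insert j (T \ R)`.
theorem prob_and_mem_span_and_mem_span_le {R T : Finset ι} {j : ι} (hjR : j ∉ R) (hjT : j ∉ T)
    (hR : #R + 1 = finrank F V) (hT : #T + 1 = finrank F V) {A : (ι → V) → Prop}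
    (hA : ∀ v x, A (update v j x) ↔ A v) :
    prob (fun v => A v ∧ (LinearIndepOn F v R ∧ v j ∈ Submodule.span F (v '' R)) ∧
      LinearIndepOn F v T ∧ v j ∈ Submodule.span F (v '' T)) ≤
      prob A * invCard F ^ 2 + invCard F ^ (#(T \ R) + 1) := by
  have ht := invCard_pos (F := F)
  let A' : (ι → V) → Prop := fun v => A v ∧ LinearIndepOn F v R ∧ LinearIndepOn F v T ∧
    Submodule.span F (v '' R) ≠ Submodule.span F (v '' T)
  have hA' : ∀ v x, A' (update v j x) ↔ A' v := fun v x => by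
    simp only [A', hA, linearIndepOn_update_iff hjR, linearIndepOn_update_iff hjT,
      span_image_update hjR, span_image_update hjT]
  have hdisj : Disjoint R (insert j (T \ R)) :=
    disjoint_insert_right.2 ⟨hjR, disjoint_sdiff⟩
  have hJ : #(insert j (T \ R)) = #(T \ R) + 1 :=
    card_insert_of_notMem fun h => hjT (mem_sdiff.1 h).1
  calc _ ≤ prob (fun v =>
          (A' v ∧ v j ∈ Submodule.span F (v '' R) ⊓ Submodule.span F (v '' T)) ∨
          (LinearIndepOn F v R ∧ ∀ i ∈ insert j (T \ R), v i ∈ Submodule.span F (v '' R))) := by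
        refine prob_mono fun v ⟨hAv, ⟨hindR, hjR⟩, hindT, hjT⟩ => ?_
        by_cases hspan : Submodule.span F (v '' R) = Submodule.span F (v '' T)
        · refine .inr ⟨hindR, (forall_mem_insert ..).2 ⟨hjR, fun i hi => ?_⟩⟩
          exact hspan ▸ mem_span_image v (mem_sdiff.1 hi).1
        · exact .inl ⟨⟨hAv, hindR, hindT, hspan⟩, hjR, hjT⟩
    _ ≤ prob A' * invCard F ^ 2 + 1 * (invCard F ^ 1) ^ #(insert j (T \ R)) := by
        refine (prob_or_le _ _).trans (add_le_add ?_ ?_)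
        · exact prob_and_mem_span_inf_le hjR hjT hR hT hA' fun v hv => hv.2
        · rw [prob_linearIndepOn_and_forall_mem_span hdisj hR]
          gcongr
          exact prob_le_one _
    _ ≤ _ := by
        rw [hJ, pow_one, one_mul]
        gcongr
        exact prob_mono fun v h => h.1

theorem prob_three_not_linearIndepOn_le_of_not_subset {S T U : Finset ι} (hS : #S = finrank F V)
    (hT : #T = finrank F V) (hU : #U = finrank F V) (hST : S ≠ T) (hUST : ¬ U ⊆ S ∪ T) :
    prob (fun v : ι → V => (∀ R : Finset ι, #R + 1 = finrank F V → LinearIndepOn F v R) ∧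
      ¬ LinearIndepOn F v S ∧ ¬ LinearIndepOn F v T ∧ ¬ LinearIndepOn F v U) ≤
      2 * finrank F V * invCard F ^ 3 := by
  obtain ⟨j, hjU, hj⟩ := not_subset.1 hUST
  rw [mem_union, not_or] at hj
  have hTS : ¬ T ⊆ S := fun h => hST (eq_of_subset_of_card_le h (hS.trans hT.symm).le).symm
  have hcard := card_erase_add_one hjU
  have ht := invCard_pos (F := F)
  calc _ ≤ prob (fun v : ι → V => ((¬ LinearIndepOn F v S ∧ ¬ LinearIndepOn F v T) ∧
          LinearIndepOn F v (U.erase j)) ∧ ¬ LinearIndepOn F v U) :=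
        prob_mono fun v ⟨hind, hdepS, hdepT, hdepU⟩ =>
          ⟨⟨⟨hdepS, hdepT⟩, hind _ (by omega)⟩, hdepU⟩
    _ = prob (fun v : ι → V => (¬ LinearIndepOn F v S ∧ ¬ LinearIndepOn F v T) ∧
          LinearIndepOn F v (U.erase j)) * invCard F ^ 1 :=
        prob_and_not_linearIndepOn_of_erase hjU (by omega) fun v x => by
          rw [linearIndepOn_update_iff hj.1, linearIndepOn_update_iff hj.2]
    _ ≤ 2 * finrank F V * invCard F ^ (1 + 1) * invCard F ^ 1 := by
        gcongr
        exact (prob_mono fun v h => h.1).trans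
          (prob_not_and_not_linearIndepOn_le hS (by omega) le_rfl hTS)
    _ = _ := by ring

theorem prob_three_not_linearIndepOn_le_of_subset {S T U : Finset ι} (hS : #S = finrank F V)
    (hT : #T = finrank F V) (hU : #U = finrank F V) (hTU : T ≠ U) (hUST : U ⊆ S ∪ T)
    (hUS : 2 ≤ #(U \ S)) :
    prob (fun v : ι → V => (∀ R : Finset ι, #R + 1 = finrank F V → LinearIndepOn F v R) ∧
      ¬ LinearIndepOn F v S ∧ ¬ LinearIndepOn F v T ∧ ¬ LinearIndepOn F v U) ≤
      2 * finrank F V * invCard F ^ 3 := by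
  obtain ⟨j, hjU, hjT⟩ := not_subset.1 fun h : U ⊆ T =>
    hTU (eq_of_subset_of_card_le h (hT.trans hU.symm).le).symm
  have hjS : j ∈ S := (mem_union.1 (hUST hjU)).resolve_right hjT
  have hcardS := card_erase_add_one hjS
  have hcardU := card_erase_add_one hjU
  have hsdiff : U.erase j \ S.erase j = U \ S := by grind
  have hk : (1 : ℝ) ≤ finrank F V := by exact_mod_cast (by omega)
  have ht := invCard_pos (F := F)
  calc _ ≤ _ := prob_mono fun v ⟨hind, hdepS, hdepT, hdepU⟩ => by
          have hindS := hind (S.erase j) (by omega)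
          have hindU := hind (U.erase j) (by omega)
          rw [linearIndepOn_iff_erase hjS, not_and_not_right] at hdepS
          rw [linearIndepOn_iff_erase hjU, not_and_not_right] at hdepU
          exact ⟨hdepT, ⟨hindS, hdepS hindS⟩, hindU, hdepU hindU⟩
    _ ≤ prob (fun v : ι → V => ¬ LinearIndepOn F v T) * invCard F ^ 2 +
          invCard F ^ (#(U.erase j \ S.erase j) + 1) :=
        prob_and_mem_span_and_mem_span_le (notMem_erase j S) (notMem_erase j U) (by omega)
          (by omega) fun v x => by rw [linearIndepOn_update_iff hjT]
    _ ≤ finrank F V * invCard F ^ 1 * invCard F ^ 2 + finrank F V * invCard F ^ 3 := by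
        gcongr
        · exact prob_not_linearIndepOn_le T (by omega) le_rfl
        · rw [hsdiff]
          exact (pow_le_pow_of_le_one ht.le invCard_lt_one.le (by omega)).trans
            (le_mul_of_one_le_left (by positivity) hk)
    _ = _ := by ring

theorem prob_three_not_linearIndepOn_le {S T U : Finset ι} (hS : #S = finrank F V)
    (hT : #T = finrank F V) (hU : #U = finrank F V) (hST : S ≠ T) (hSU : S ≠ U) (hTU : T ≠ U)
    (hW : ∀ W : Finset ι, #W = finrank F V + 1 → S ⊆ W → T ⊆ W → ¬ U ⊆ W) :
    prob (fun v : ι → V => (∀ R : Finset ι, #R + 1 = finrank F V → LinearIndepOn F v R) ∧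
      ¬ LinearIndepOn F v S ∧ ¬ LinearIndepOn F v T ∧ ¬ LinearIndepOn F v U) ≤
      2 * finrank F V * invCard F ^ 3 := by
  by_cases hUST : U ⊆ S ∪ T
  · by_cases hTSU : T ⊆ S ∪ U
    · refine prob_three_not_linearIndepOn_le_of_subset hS hT hU hTU hUST ?_
      by_contra hlt
      have hpos : 0 < #(U \ S) := card_pos.2 (sdiff_nonempty.2 fun h =>
        hSU (eq_of_subset_of_card_le h (hS.trans hU.symm).le).symm)
      have hcard := card_sdiff_add_card U S
      rw [union_comm] at hcard
      exact hW (S ∪ U) (by omega) subset_union_left hTSU subset_union_right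
    · refine (prob_mono fun v => ?_).trans
        (prob_three_not_linearIndepOn_le_of_not_subset hS hU hT hSU hTSU)
      tauto
  · exact prob_three_not_linearIndepOn_le_of_not_subset hS hT hU hST hUST

end RandomVectors

section SecondOrderBounds

variable {F V ι : Type*} [Field F] [Fintype F]

variable [AddCommGroup V] [Module F V] [Fintype V]
variable [Fintype ι] [DecidableEq ι]

theorem abs_prob_not_linearIndepOn_sub_le {S : Finset ι} (hne : S.Nonempty) {d : ℕ}
    (hS : #S + d = finrank F V + 1) (hd : 1 ≤ d) :
    |prob (fun v : ι → V => ¬ LinearIndepOn F v S) - invCard F ^ d| ≤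
      2 * finrank F V * invCard F ^ (d + 1) := by
  obtain ⟨j, hj⟩ := hne
  have hcard := card_erase_add_one hj
  have ht := invCard_pos (F := F)
  have hstep := prob_and_not_linearIndepOn_of_erase (V := V) hj hS (A := fun _ => True) (by simp)
  simp only [true_and] at hstep
  have hle : prob (fun v : ι → V => ¬ LinearIndepOn F v (S.erase j)) ≤
      finrank F V * invCard F ^ (d + 1) := prob_not_linearIndepOn_le _ (by omega) (by omega)
  calc _ ≤ _ := abs_prob_sub_le (by positivity) hstep
    _ ≤ finrank F V * invCard F ^ (d + 1) * 1 + finrank F V * invCard F ^ (d + 1) := by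
        gcongr
        · exact pow_le_one₀ ht.le invCard_lt_one.le
        · exact (prob_mono fun v h => h.1).trans hle
    _ = _ := by ring

theorem abs_prob_not_linearIndepOn_sub_add_sq_le {S : Finset ι} (hS : #S = finrank F V)
    (hk : 2 ≤ finrank F V) :
    |prob (fun v : ι → V => ¬ LinearIndepOn F v S) - (invCard F + invCard F ^ 2)| ≤
      (2 * finrank F V + 1) * invCard F ^ 3 := by
  obtain ⟨j, hj⟩ : S.Nonempty := card_pos.1 (by omega)
  have hcard := card_erase_add_one hj
  have ht := invCard_pos (F := F)
  have ht1 := invCard_lt_one (F := F)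
  have hmul := prob_linearIndepOn_eq_mul (F := F) (V := V) hj (d := 1) (by omega)
  have hnot := prob_not fun v : ι → V => LinearIndepOn F v S
  have hnot' := prob_not fun v : ι → V => LinearIndepOn F v (S.erase j)
  have herr := abs_prob_not_linearIndepOn_sub_le (F := F) (V := V) (S := S.erase j) (d := 2)
    (card_pos.1 (by omega)) (by omega) (by omega)
  set e := prob (fun v : ι → V => ¬ LinearIndepOn F v (S.erase j)) - invCard F ^ 2 with he
  calc _ = |e * (1 - invCard F) - invCard F ^ 3| := by
        congr 1
        rw [he, hnot, hnot', hmul]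
        ring
    _ ≤ |e| * (1 - invCard F) + invCard F ^ 3 := by
        refine (abs_sub _ _).trans_eq ?_
        rw [abs_mul, abs_of_pos (sub_pos.2 ht1), abs_of_pos (pow_pos ht 3)]
    _ ≤ 2 * finrank F V * invCard F ^ 3 * 1 + invCard F ^ 3 := by
        gcongr
        linarith
    _ = _ := by ring

theorem abs_prob_forall_not_linearIndepOn_sub_le {W : Finset ι} (hW : #W = finrank F V + 1)
    (hk : 2 ≤ finrank F V) :
    |prob (fun v : ι → V => ∀ S ∈ powersetCard (finrank F V) W, ¬ LinearIndepOn F v S) -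
      invCard F ^ 2| ≤ 3 * finrank F V * invCard F ^ 3 := by
  obtain ⟨R, hRW, hR⟩ := exists_subset_card_eq (show finrank F V - 1 ≤ #W by omega)
  obtain ⟨r, hr⟩ : R.Nonempty := card_pos.1 (by omega)
  have hS : W.erase r ∈ powersetCard (finrank F V) W :=
    mem_powersetCard.2 ⟨erase_subset r W, by rw [card_erase_of_mem (hRW hr)]; omega⟩
  have ht := invCard_pos (F := F)
  have hdep : prob (fun v : ι → V => LinearIndepOn F v R ∧
      ∀ S ∈ powersetCard (finrank F V) W, ¬ LinearIndepOn F v S) =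
      prob (fun v : ι → V => LinearIndepOn F v R) * invCard F ^ 2 := by
    have hsdiff : #(W \ R) = 2 := by rw [card_sdiff_of_subset hRW]; omega
    have hspan := prob_linearIndepOn_and_forall_mem_span (F := F) (V := V)
      (disjoint_sdiff (s := R) (t := W)) (d := 1) (by omega)
    rw [pow_one, hsdiff] at hspan
    rw [← hspan]
    refine prob_congr fun v => and_congr_right fun hind => ?_
    rw [show finrank F V = #R + 1 by omega, forall_not_linearIndepOn_iff hRW hind]
    refine ⟨fun h i hi => h i (mem_sdiff.1 hi).1, fun h i hi => ?_⟩
    by_cases hiR : i ∈ R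
    · exact mem_span_image v hiR
    · exact h i (mem_sdiff.2 ⟨hi, hiR⟩)
  calc _ ≤ _ := abs_prob_sub_le (by positivity) hdep
    _ ≤ finrank F V * invCard F ^ 2 * invCard F + 2 * finrank F V * invCard F ^ (2 + 1) := by
        gcongr
        · exact prob_not_linearIndepOn_le R (by omega) (by omega)
        · exact pow_le_of_le_one ht.le invCard_lt_one.le two_ne_zero
        · refine (prob_mono fun v h => ⟨h.2 _ hS, h.1⟩).trans
            (prob_not_and_not_linearIndepOn_le (mem_powersetCard.1 hS).2 (by omega) (by omega)
              fun hRS => notMem_erase r W (hRS hr))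
    _ = _ := by ring

theorem prob_linearIndepOn_erase_and_not_and_not {S T : Finset ι} {i j : ι} (hi : i ∈ S \ T)
    (hj : j ∈ T \ S) (hS : #S = finrank F V) (hT : #T = finrank F V) :
    prob (fun v : ι → V => (LinearIndepOn F v (S.erase i) ∧ LinearIndepOn F v (T.erase j)) ∧
      ¬ LinearIndepOn F v S ∧ ¬ LinearIndepOn F v T) =
      prob (fun v : ι → V => LinearIndepOn F v (S.erase i) ∧ LinearIndepOn F v (T.erase j)) *
        invCard F ^ 2 := by
  obtain ⟨hiS, hiT⟩ := mem_sdiff.1 hi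
  obtain ⟨hjT, hjS⟩ := mem_sdiff.1 hj
  have hstepT := prob_and_not_linearIndepOn_of_erase (F := F) (V := V) hjT (d := 1) (by omega)
    (A := fun v => LinearIndepOn F v (S.erase i) ∧ ¬ LinearIndepOn F v S) fun v x => by
      rw [linearIndepOn_update_iff fun h => hjS (mem_of_mem_erase h), linearIndepOn_update_iff hjS]
  have hstepS := prob_and_not_linearIndepOn_of_erase (F := F) (V := V) hiS (d := 1) (by omega)
    (A := fun v => LinearIndepOn F v (T.erase j)) fun v x =>
      linearIndepOn_update_iff (fun h => hiT (mem_of_mem_erase h)) v x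
  calc _ = _ := prob_congr fun v => by tauto
    _ = _ := hstepT
    _ = prob (fun v : ι → V => (LinearIndepOn F v (T.erase j) ∧ LinearIndepOn F v (S.erase i)) ∧
          ¬ LinearIndepOn F v S) * invCard F ^ 1 := by
        congr 1
        exact prob_congr fun v => by tauto
    _ = _ := by
        rw [hstepS, mul_assoc, ← pow_add]
        congr 1
        exact prob_congr fun v => and_comm

theorem abs_prob_not_and_not_linearIndepOn_sub_le {S T : Finset ι} (hS : #S = finrank F V)
    (hT : #T = finrank F V) (hST : #(S ∩ T) + 2 ≤ finrank F V) :
    |prob (fun v : ι → V => ¬ LinearIndepOn F v S ∧ ¬ LinearIndepOn F v T) - invCard F ^ 2| ≤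
      6 * finrank F V * invCard F ^ 3 := by
  have hsdiffS := card_sdiff_add_card_inter S T
  have hsdiffT := card_sdiff_add_card_inter T S
  rw [inter_comm] at hsdiffT
  obtain ⟨i, hi⟩ : (S \ T).Nonempty := card_pos.1 (by omega)
  obtain ⟨j, hj⟩ : (T \ S).Nonempty := card_pos.1 (by omega)
  have hcardS := card_erase_add_one (mem_sdiff.1 hi).1
  have hcardT := card_erase_add_one (mem_sdiff.1 hj).1
  have hsubS : ¬ S.erase i ⊆ T := fun h => by
    have := card_le_card (subset_inter (erase_subset i S) h)
    omega
  have hsubT : ¬ T.erase j ⊆ S := fun h => by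
    have := card_le_card (subset_inter h (erase_subset j T))
    omega
  have ht := invCard_pos (F := F)
  calc _ ≤ _ := abs_prob_sub_le (by positivity)
        (prob_linearIndepOn_erase_and_not_and_not hi hj hS hT)
    _ ≤ (finrank F V * invCard F ^ 2 + finrank F V * invCard F ^ 2) * invCard F +
          (2 * finrank F V * invCard F ^ (2 + 1) + 2 * finrank F V * invCard F ^ (2 + 1)) := by
        simp only [not_and_or]
        gcongr
        · exact (prob_or_le _ _).trans (add_le_add
            (prob_not_linearIndepOn_le _ (by omega) (by omega))
            (prob_not_linearIndepOn_le _ (by omega) (by omega)))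
        · exact pow_le_of_le_one ht.le invCard_lt_one.le two_ne_zero
        · refine (prob_mono fun v h => ?_).trans ((prob_or_le _ _).trans (add_le_add
            (prob_not_and_not_linearIndepOn_le hT (T := S.erase i) (by omega) (by omega) hsubS)
            (prob_not_and_not_linearIndepOn_le hS (T := T.erase j) (by omega) (by omega) hsubT)))
          tauto
    _ = _ := by ring

end SecondOrderBounds

section SetSystems

variable {ι : Type*} [DecidableEq ι]

/-- The ordered pairs of members of `B` that meet in at most `k - 2` points. For `k`-sets this means
that they do not lie in a common `(k + 1)`-set. -/
def farPairs (k : ℕ) (B : Finset (Finset ι)) : Finset (Finset ι × Finset ι) :=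
  {p ∈ B ×ˢ B | #(p.1 ∩ p.2) + 2 ≤ k}

variable {k : ℕ}

theorem farPairs_eq_empty {B : Finset (Finset ι)} (h : ∀ S ∈ B, ∀ T ∈ B, k ≤ #(S ∩ T) + 1) :
    farPairs k B = ∅ := by
  rw [farPairs, filter_eq_empty_iff]
  rintro ⟨S, T⟩ hp hST
  rw [mem_product] at hp
  have := h S hp.1 T hp.2
  dsimp only at hST
  omega

theorem farPairs_pair {S T : Finset ι} (hS : #S = k) (hT : #T = k) (hST : #(S ∩ T) + 2 ≤ k) :
    farPairs k {S, T} = {(S, T), (T, S)} := by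
  ext ⟨A, B⟩
  simp only [farPairs, mem_filter, mem_product, mem_insert, mem_singleton, Prod.mk.injEq]
  constructor
  · rintro ⟨⟨rfl | rfl, rfl | rfl⟩, hlt⟩
    · rw [inter_self] at hlt; omega
    · exact .inl ⟨rfl, rfl⟩
    · exact .inr ⟨rfl, rfl⟩
    · rw [inter_self] at hlt; omega
  · rintro (⟨rfl, rfl⟩ | ⟨rfl, rfl⟩)
    · exact ⟨⟨.inl rfl, .inr rfl⟩, hST⟩
    · exact ⟨⟨.inr rfl, .inl rfl⟩, inter_comm A B ▸ hST⟩

theorem card_inter_add_one_ge_of_subset {R S T : Finset ι} (hR : #R + 1 = k) (hS : R ⊆ S)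
    (hT : R ⊆ T) : k ≤ #(S ∩ T) + 1 := by
  have := card_le_card (subset_inter hS hT)
  omega

theorem card_inter_add_one_ge_of_mem_powersetCard {S T W : Finset ι} (hW : #W = k + 1)
    (hS : S ∈ powersetCard k W) (hT : T ∈ powersetCard k W) : k ≤ #(S ∩ T) + 1 := by
  rw [mem_powersetCard] at hS hT
  have := card_le_card (union_subset hS.1 hT.1)
  have := card_union_add_card_inter S T
  omega

variable [Fintype ι]

/-- The `(k + 1)`-sets all of whose `k`-subsets belong to `B`. -/
def filledSets (k : ℕ) (B : Finset (Finset ι)) : Finset (Finset ι) :=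
  {W ∈ powersetCard (k + 1) univ | powersetCard k W ⊆ B}

theorem filledSets_eq_empty_of_card_le {B : Finset (Finset ι)} (hB : #B ≤ k) :
    filledSets k B = ∅ := by
  rw [filledSets, filter_eq_empty_iff]
  intro W hW hsub
  have := card_le_card hsub
  rw [card_powersetCard, (mem_powersetCard.1 hW).2, Nat.choose_succ_self_right] at this
  omega

theorem filledSets_powersetCard {W : Finset ι} (hW : #W = k + 1) (hk : 1 ≤ k) :
    filledSets k (powersetCard k W) = {W} := by
  ext W'
  simp only [filledSets, mem_filter, mem_powersetCard, subset_univ, true_and, mem_singleton]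
  refine ⟨fun ⟨hW', hsub⟩ => ?_, by rintro rfl; exact ⟨hW, subset_rfl⟩⟩
  refine eq_of_subset_of_card_le (fun x hx => ?_) (hW.trans hW'.symm).le
  obtain ⟨S, hxS, hS, hcard⟩ := exists_subsuperset_card_eq (singleton_subset_iff.2 hx)
    (by simpa using hk) (by omega : k ≤ #W')
  exact (mem_powersetCard.1 (hsub (mem_powersetCard.2 ⟨hS, hcard⟩))).1
    (singleton_subset_iff.1 hxS)

theorem filledSets_superset {R : Finset ι} (hR : R.Nonempty) :
    filledSets k {S ∈ powersetCard k univ | R ⊆ S} = ∅ := by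
  obtain ⟨r, hr⟩ := hR
  rw [filledSets, filter_eq_empty_iff]
  intro W hW hsub
  have hcard := (mem_powersetCard.1 hW).2
  obtain ⟨S, hS, hScard⟩ := exists_subset_card_eq (show k ≤ #(W.erase r) by
    have := pred_card_le_card_erase (s := W) (a := r); omega)
  have hRS := (mem_filter.1 (hsub (mem_powersetCard.2
    ⟨hS.trans (erase_subset r W), hScard⟩))).2
  exact notMem_erase r W (hS (hRS hr))

/-- The second-order inclusion-exclusion estimate for the indicator of `B = ∅`, where `R` and `B`
stand for the systems of dependent `(k - 1)`-sets and of dependent `k`-sets. Its expectation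
is computed in `hasExpansion_expect_secondOrderEstimate`. -/
noncomputable def secondOrderEstimate (k : ℕ) (R B : Finset (Finset ι)) : ℝ :=
  1 - #B + ((Fintype.card ι : ℝ) - k) * #R + k * #(filledSets k B) + #(farPairs k B) / 2

theorem secondOrderEstimate_empty : secondOrderEstimate (ι := ι) k ∅ ∅ = 1 := by
  have hfilled : filledSets (ι := ι) k ∅ = ∅ := filledSets_eq_empty_of_card_le (by simp)
  simp [secondOrderEstimate, hfilled, farPairs_eq_empty]

theorem secondOrderEstimate_singleton {S : Finset ι} (hS : #S = k) (hk : 1 ≤ k) :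
    secondOrderEstimate k ∅ {S} = 0 := by
  have hfar : farPairs k {S} = ∅ := farPairs_eq_empty (by simp [hS])
  simp [secondOrderEstimate, filledSets_eq_empty_of_card_le, hk, hfar]

theorem secondOrderEstimate_pair {S T : Finset ι} (hS : #S = k) (hT : #T = k)
    (hST : #(S ∩ T) + 2 ≤ k) : secondOrderEstimate k ∅ {S, T} = 0 := by
  have hne : S ≠ T := by
    rintro rfl
    rw [inter_self] at hST
    omega
  have hfilled : filledSets k {S, T} = ∅ :=
    filledSets_eq_empty_of_card_le (by rw [card_pair hne]; omega)
  rw [secondOrderEstimate, hfilled, farPairs_pair hS hT hST, card_pair hne,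
    card_pair (by simp [hne])]
  norm_num

theorem secondOrderEstimate_powersetCard {W : Finset ι} (hW : #W = k + 1) (hk : 1 ≤ k) :
    secondOrderEstimate k ∅ (powersetCard k W) = 0 := by
  rw [secondOrderEstimate, filledSets_powersetCard hW hk, farPairs_eq_empty fun S hS T hT =>
    card_inter_add_one_ge_of_mem_powersetCard hW hS hT, card_powersetCard, hW,
    Nat.choose_succ_self_right]
  simp

theorem secondOrderEstimate_superset {R : Finset ι} (hR : #R + 1 = k) (hk : 2 ≤ k)
    (hn : k ≤ Fintype.card ι) :
    secondOrderEstimate k {R} {S ∈ powersetCard k univ | R ⊆ S} = 0 := by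
  rw [secondOrderEstimate, filledSets_superset (card_pos.1 (by omega)), card_empty,
    farPairs_eq_empty fun S hS T hT =>
      card_inter_add_one_ge_of_subset hR (mem_filter.1 hS).2 (mem_filter.1 hT).2,
    card_filter_powersetCard_subset R univ k (subset_univ R) (by omega), ← hR,
    Nat.add_sub_cancel_left, Nat.choose_one_right, card_univ, card_singleton, card_empty]
  push_cast [Nat.cast_sub (by omega : #R ≤ Fintype.card ι)]
  ring

theorem exists_abs_secondOrderEstimate_le (ι : Type*) [Fintype ι] [DecidableEq ι] (k : ℕ) :
    ∃ K, ∀ R B : Finset (Finset ι),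
      |(if B = ∅ then 1 else 0) - secondOrderEstimate k R B| ≤ K := by
  let f : Finset (Finset ι) × Finset (Finset ι) → ℝ := fun p =>
    |(if p.2 = ∅ then 1 else 0) - secondOrderEstimate k p.1 p.2|
  obtain ⟨K, hK⟩ := (Set.finite_range f).bddAbove
  exact ⟨K, fun R B => hK ⟨(R, B), rfl⟩⟩

theorem card_filter_powersetCard_card_inter (S : Finset ι) {i j : ℕ} :
    #{T ∈ powersetCard (i + j) (univ : Finset ι) | #(S ∩ T) = i} =
      (#S).choose i * (Fintype.card ι - #S).choose j := by
  rw [← card_compl, ← card_powersetCard, ← card_powersetCard, ← card_product]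
  refine card_nbij' (fun T => (S ∩ T, T \ S)) (fun p => p.1 ∪ p.2) ?_ ?_ ?_ ?_
  · intro T hT
    simp only [coe_filter, mem_powersetCard, subset_univ, true_and, Set.mem_ofPred_eq] at hT
    have := card_sdiff_add_card_inter T S
    rw [inter_comm] at this
    simp only [coe_product, Set.mem_prod, mem_coe, mem_powersetCard, inter_subset_left, true_and]
    exact ⟨hT.2, fun x hx => by simpa using (mem_sdiff.1 hx).2, by omega⟩
  · rintro ⟨A, B⟩ hAB
    simp only [coe_product, Set.mem_prod, mem_coe, mem_powersetCard] at hAB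
    obtain ⟨⟨hA, hAi⟩, hB, hBj⟩ := hAB
    have hSB : Disjoint S B := disjoint_left.2 fun x hxS hxB => mem_compl.1 (hB hxB) hxS
    have hinter : S ∩ (A ∪ B) = A := by
      rw [inter_union_distrib_left, inter_eq_right.2 hA, disjoint_iff_inter_eq_empty.1 hSB,
        union_empty]
    simp only [coe_filter, mem_powersetCard, subset_univ, true_and, Set.mem_ofPred_eq, hinter]
    exact ⟨by rw [card_union_of_disjoint (hSB.mono_left hA), hAi, hBj], hAi⟩
  · intro T _
    ext x
    simp only [mem_union, mem_inter, mem_sdiff]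
    tauto
  · rintro ⟨A, B⟩ hAB
    simp only [coe_product, Set.mem_prod, mem_coe, mem_powersetCard] at hAB
    obtain ⟨⟨hA, -⟩, hB, -⟩ := hAB
    have hSB : Disjoint S B := disjoint_left.2 fun x hxS hxB => mem_compl.1 (hB hxB) hxS
    dsimp only
    rw [Prod.mk.injEq, inter_union_distrib_left, inter_eq_right.2 hA,
      disjoint_iff_inter_eq_empty.1 hSB, union_empty, union_sdiff_distrib,
      sdiff_eq_empty_iff_subset.2 hA, hSB.symm.sdiff_eq_left, empty_union]
    exact ⟨rfl, rfl⟩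

theorem card_filter_powersetCard_far {S : Finset ι} (hS : #S = k) (hk : 1 ≤ k) :
    #{T ∈ powersetCard k (univ : Finset ι) | #(S ∩ T) + 2 ≤ k} +
      (k * (Fintype.card ι - k) + 1) = (Fintype.card ι).choose k := by
  have heq := card_filter_powersetCard_card_inter S (i := k) (j := 0)
  have hnear := card_filter_powersetCard_card_inter S (i := k - 1) (j := 1)
  have hsum : #{T ∈ powersetCard k (univ : Finset ι) | ¬ #(S ∩ T) + 2 ≤ k} =
      #{T ∈ powersetCard k (univ : Finset ι) | #(S ∩ T) = k} +
        #{T ∈ powersetCard k (univ : Finset ι) | #(S ∩ T) = k - 1} := by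
    rw [← card_union_of_disjoint (disjoint_filter.2 fun T _ _ _ => by omega), ← filter_or]
    congr 1
    refine filter_congr fun T _ => ?_
    have := card_le_card (inter_subset_left : S ∩ T ⊆ S)
    omega
  have htotal := card_filter_add_card_filter_not (s := powersetCard k (univ : Finset ι))
    fun T => #(S ∩ T) + 2 ≤ k
  rw [add_zero, hS, Nat.choose_self, Nat.choose_zero_right] at heq
  rw [Nat.sub_add_cancel hk, hS, Nat.choose_one_right, ← Nat.choose_symm (by omega),
    Nat.sub_sub_self hk, Nat.choose_one_right] at hnear
  rw [hsum, heq, hnear, card_powersetCard, card_univ] at htotal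
  omega

theorem card_farPairs_add (ι : Type*) [Fintype ι] [DecidableEq ι] {k : ℕ} (hk : 1 ≤ k) :
    #(farPairs k (powersetCard k (univ : Finset ι))) +
      (Fintype.card ι).choose k * (k * (Fintype.card ι - k) + 1) =
      (Fintype.card ι).choose k ^ 2 := by
  have hcard : #(powersetCard k (univ : Finset ι)) = (Fintype.card ι).choose k := by
    rw [card_powersetCard, card_univ]
  have hsum : ∀ m, (Fintype.card ι).choose k * m = ∑ _S ∈ powersetCard k (univ : Finset ι), m :=
    fun m => by rw [sum_const, hcard, smul_eq_mul]
  rw [farPairs, card_filter, sum_product, sq, hsum, hsum, ← sum_add_distrib]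
  refine sum_congr rfl fun S hS => ?_
  rw [← card_filter, card_filter_powersetCard_far (mem_powersetCard.1 hS).2 hk]

end SetSystems

section DependentSets

variable {F V ι : Type*} [Field F] [AddCommGroup V] [Module F V] [Fintype ι]

open Classical in
/-- The `m`-element index sets on which the vectors `v i` are linearly dependent. -/
noncomputable def dependentSets (F : Type*) {V ι : Type*} [Field F] [AddCommGroup V] [Module F V]
    [Fintype ι] (m : ℕ) (v : ι → V) : Finset (Finset ι) :=
  {S ∈ powersetCard m univ | ¬ LinearIndepOn F v S}

variable {v : ι → V} {k m : ℕ} {S : Finset ι}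

theorem mem_dependentSets : S ∈ dependentSets F m v ↔ #S = m ∧ ¬ LinearIndepOn F v S := by
  simp [dependentSets]

theorem linearIndepOn_of_dependentSets_eq_empty (h : dependentSets F m v = ∅) (hS : #S = m) :
    LinearIndepOn F v S :=
  not_not.1 fun hdep => notMem_empty S (h ▸ mem_dependentSets.2 ⟨hS, hdep⟩)

theorem dependentSets_eq_empty_iff :
    dependentSets F k v = ∅ ↔ ∀ S : Finset ι, #S = k → LinearIndepOn F v S :=
  ⟨fun h _ hS => linearIndepOn_of_dependentSets_eq_empty h hS, fun h =>
    eq_empty_of_forall_notMem fun S hS => (mem_dependentSets.1 hS).2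
      (h S (mem_dependentSets.1 hS).1)⟩

theorem mem_dependentSets_of_subset {R : Finset ι} (hR : R ∈ dependentSets F k v) (hRS : R ⊆ S)
    (hS : #S = m) : S ∈ dependentSets F m v :=
  mem_dependentSets.2 ⟨hS, fun h => (mem_dependentSets.1 hR).2 (h.mono (coe_subset.2 hRS))⟩

/-- The configurations at which `secondOrderEstimate` is exact; all others together have
probability `O(q⁻³)`. -/
structure IsTypical (F : Type*) {V ι : Type*} [Field F] [AddCommGroup V] [Module F V] [Fintype ι]
    (k : ℕ) (v : ι → V) : Prop where
  subset : ∀ R ∈ dependentSets F (k - 1) v, ∀ S ∈ dependentSets F k v, R ⊆ S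
  exists_superset : dependentSets F (k - 1) v = ∅ → ∀ S ∈ dependentSets F k v,
    ∀ T ∈ dependentSets F k v, ∀ U ∈ dependentSets F k v, S ≠ T → S ≠ U → T ≠ U →
      ∃ W : Finset ι, #W = k + 1 ∧ S ⊆ W ∧ T ⊆ W ∧ U ⊆ W

namespace IsTypical

variable {R T : Finset ι}

theorem dependentSets_pred_eq_singleton (h : IsTypical F k v) (hk : k < Fintype.card ι)
    (hR : R ∈ dependentSets F (k - 1) v) : dependentSets F (k - 1) v = {R} := by
  classical
  refine eq_singleton_iff_unique_mem.2 ⟨hR, fun R' hR' => ?_⟩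
  have hcard := (mem_dependentSets.1 hR).1
  have hcard' := (mem_dependentSets.1 hR').1
  by_contra hne
  obtain ⟨r, hrR, hrR'⟩ := not_subset.1 fun hsub =>
    hne (eq_of_subset_of_card_le hsub (hcard'.trans hcard.symm).le).symm
  obtain ⟨S, hR'S, hS, hScard⟩ := exists_subsuperset_card_eq
    (subset_erase.2 ⟨subset_univ R', hrR'⟩) (by omega : #R' ≤ k)
    (by rw [card_erase_of_mem (mem_univ r), card_univ]; omega)
  exact notMem_erase r univ
    (hS (h.subset R hR S (mem_dependentSets_of_subset hR' hR'S hScard) hrR))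

variable [DecidableEq ι]

theorem dependentSets_eq_superset (h : IsTypical F k v) (hR : R ∈ dependentSets F (k - 1) v) :
    dependentSets F k v = {S ∈ powersetCard k (univ : Finset ι) | R ⊆ S} := by
  ext S
  simp only [mem_filter, mem_powersetCard, subset_univ, true_and]
  exact ⟨fun hS => ⟨(mem_dependentSets.1 hS).1, h.subset R hR S hS⟩,
    fun ⟨hS, hRS⟩ => mem_dependentSets_of_subset hR hRS hS⟩

theorem dependentSets_eq_pair (h : IsTypical F k v) (hpred : dependentSets F (k - 1) v = ∅)
    (hS : S ∈ dependentSets F k v) (hT : T ∈ dependentSets F k v) (hST : #(S ∩ T) + 2 ≤ k) :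
    dependentSets F k v = {S, T} := by
  have hcardS := (mem_dependentSets.1 hS).1
  have hcardT := (mem_dependentSets.1 hT).1
  have hne : S ≠ T := by
    rintro rfl
    rw [inter_self] at hST
    omega
  ext U
  rw [mem_insert, mem_singleton]
  refine ⟨fun hU => ?_, by rintro (rfl | rfl) <;> assumption⟩
  by_contra! hU'
  obtain ⟨W, hW, hSW, hTW, -⟩ :=
    h.exists_superset hpred S hS T hT U hU hne hU'.1.symm hU'.2.symm
  have := card_le_card (union_subset hSW hTW)
  have := card_union_add_card_inter S T
  omega

theorem dependentSets_eq_powersetCard (h : IsTypical F k v)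
    (hpred : dependentSets F (k - 1) v = ∅) (hS : S ∈ dependentSets F k v)
    (hT : T ∈ dependentSets F k v) (hne : S ≠ T) (hST : k ≤ #(S ∩ T) + 1) :
    #(S ∪ T) = k + 1 ∧ dependentSets F k v = powersetCard k (S ∪ T) := by
  have hcardS := (mem_dependentSets.1 hS).1
  have hcardT := (mem_dependentSets.1 hT).1
  have hcard : #(S ∩ T) + 1 = k := by
    have hlt : #(S ∩ T) < #S := card_lt_card ⟨inter_subset_left, fun hsub => hne
      (eq_of_subset_of_card_le (hsub.trans inter_subset_right) (by omega))⟩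
    omega
  have hunion : #(S ∪ T) = k + 1 := by
    have := card_union_add_card_inter S T
    omega
  have hind : LinearIndepOn F v ↑(S ∩ T) :=
    linearIndepOn_of_dependentSets_eq_empty hpred (by omega)
  have hspan : ∀ {U}, U ∈ dependentSets F k v → S ∩ T ⊆ U →
      ∀ i ∈ U, v i ∈ Submodule.span F (v '' ↑(S ∩ T)) := fun {U} hU hsub => by
    rw [mem_dependentSets, ← hcard] at hU
    refine (forall_not_linearIndepOn_iff hsub hind).1 ?_
    rw [← hU.1, powersetCard_self]
    simpa using hU.2
  have hdep := (forall_not_linearIndepOn_iff (inter_subset_left.trans subset_union_left) hind).2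
    fun i hi => (mem_union.1 hi).elim (hspan hS inter_subset_left i) (hspan hT inter_subset_right i)
  rw [hcard] at hdep
  refine ⟨hunion, ext fun U => ⟨fun hU => ?_, fun hU =>
    mem_dependentSets.2 ⟨(mem_powersetCard.1 hU).2, hdep U hU⟩⟩⟩
  refine mem_powersetCard.2 ⟨?_, (mem_dependentSets.1 hU).1⟩
  rcases eq_or_ne S U with rfl | hSU
  · exact subset_union_left
  rcases eq_or_ne T U with rfl | hTU
  · exact subset_union_right
  obtain ⟨W, hW, hSW, hTW, hUW⟩ := h.exists_superset hpred S hS T hT U hU hne hSU hTU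
  rwa [eq_of_subset_of_card_le (union_subset hSW hTW) (by omega)]

theorem secondOrderEstimate_eq (h : IsTypical F k v) (hk : 2 ≤ k) (hn : k < Fintype.card ι) :
    secondOrderEstimate k (dependentSets F (k - 1) v) (dependentSets F k v) =
      if dependentSets F k v = ∅ then 1 else 0 := by
  rcases (dependentSets F (k - 1) v).eq_empty_or_nonempty with hpred | ⟨R, hR⟩
  · rcases (dependentSets F k v).eq_empty_or_nonempty with hempty | ⟨S, hS⟩
    · rw [if_pos hempty, hpred, hempty, secondOrderEstimate_empty]
    rw [if_neg (ne_empty_of_mem hS), hpred]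
    have hcardS := (mem_dependentSets.1 hS).1
    by_cases hsingle : ∀ T ∈ dependentSets F k v, T = S
    · rw [eq_singleton_iff_unique_mem.2 ⟨hS, hsingle⟩,
        secondOrderEstimate_singleton hcardS (by omega)]
    push Not at hsingle
    obtain ⟨T, hT, hne⟩ := hsingle
    rcases le_or_gt (#(S ∩ T) + 2) k with hfar | hnear
    · rw [h.dependentSets_eq_pair hpred hS hT hfar,
        secondOrderEstimate_pair hcardS (mem_dependentSets.1 hT).1 hfar]
    · obtain ⟨hcard, heq⟩ :=
        h.dependentSets_eq_powersetCard hpred hS hT hne.symm (by omega)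
      rw [heq, secondOrderEstimate_powersetCard hcard (by omega)]
  · have hcard : #R + 1 = k := by
      have := (mem_dependentSets.1 hR).1
      omega
    obtain ⟨S, hRS, -, hS⟩ := exists_subsuperset_card_eq (subset_univ R) (by omega : #R ≤ k) hn.le
    rw [if_neg (ne_empty_of_mem (mem_dependentSets_of_subset hR hRS hS)),
      h.dependentSets_pred_eq_singleton hn hR, h.dependentSets_eq_superset hR,
      secondOrderEstimate_superset hcard hk hn.le]

end IsTypical

section Probability

variable [Fintype V] [DecidableEq ι]

theorem abs_prob_sub_expect_secondOrderEstimate_le {K : ℝ} (hk : 2 ≤ finrank F V)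
    (hn : finrank F V < Fintype.card ι)
    (hK : ∀ R B : Finset (Finset ι),
      |(if B = ∅ then 1 else 0) - secondOrderEstimate (finrank F V) R B| ≤ K) :
    |prob (fun v : ι → V => dependentSets F (finrank F V) v = ∅) -
      𝔼 v : ι → V, secondOrderEstimate (finrank F V) (dependentSets F (finrank F V - 1) v)
        (dependentSets F (finrank F V) v)| ≤
      K * prob fun v : ι → V => ¬ IsTypical F (finrank F V) v := by
  rw [prob, prob, ← expect_sub_distrib, mul_expect]
  refine (abs_expect_le _ _).trans (expect_le_expect fun v _ => ?_)
  by_cases htyp : IsTypical F (finrank F V) v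
  · rw [htyp.secondOrderEstimate_eq hk hn, if_neg (not_not.2 htyp), mul_zero]
    split_ifs <;> simp
  · rw [if_pos htyp, mul_one]
    have hbound := hK (dependentSets F (finrank F V - 1) v) (dependentSets F (finrank F V) v)
    split_ifs at hbound ⊢ <;> exact hbound

variable [Fintype F]

variable (F V ι)

theorem prob_exists_pair_not_linearIndepOn_le :
    prob (fun v : ι → V => ∃ p : Finset ι × Finset ι,
      (#p.1 = finrank F V ∧ #p.2 + 2 = finrank F V + 1 ∧ ¬ p.2 ⊆ p.1) ∧
        ¬ LinearIndepOn F v p.1 ∧ ¬ LinearIndepOn F v p.2) ≤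
      Fintype.card (Finset ι) ^ 2 * (2 * finrank F V * invCard F ^ 3) := by
  have ht := invCard_pos (F := F)
  refine (prob_exists_and_le (b := 2 * finrank F V * invCard F ^ 3) (by positivity)
    fun p ⟨hS, hR, hRS⟩ => ?_).trans_eq (by rw [Fintype.card_prod, Nat.cast_mul, sq])
  exact prob_not_and_not_linearIndepOn_le (F := F) (V := V) hS hR one_le_two hRS

theorem prob_exists_triple_not_linearIndepOn_le :
    prob (fun v : ι → V => ∃ p : Finset ι × Finset ι × Finset ι,
      ((#p.1 = finrank F V ∧ #p.2.1 = finrank F V ∧ #p.2.2 = finrank F V) ∧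
        (p.1 ≠ p.2.1 ∧ p.1 ≠ p.2.2 ∧ p.2.1 ≠ p.2.2) ∧
        ∀ W : Finset ι, #W = finrank F V + 1 → p.1 ⊆ W → p.2.1 ⊆ W → ¬ p.2.2 ⊆ W) ∧
      (∀ R : Finset ι, #R + 1 = finrank F V → LinearIndepOn F v R) ∧
        ¬ LinearIndepOn F v p.1 ∧ ¬ LinearIndepOn F v p.2.1 ∧ ¬ LinearIndepOn F v p.2.2) ≤
      Fintype.card (Finset ι) ^ 3 * (2 * finrank F V * invCard F ^ 3) := by
  have ht := invCard_pos (F := F)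
  refine (prob_exists_and_le (b := 2 * finrank F V * invCard F ^ 3) (by positivity)
    fun p ⟨⟨hS, hT, hU⟩, ⟨hST, hSU, hTU⟩, hW⟩ => ?_).trans_eq (by
      simp only [Fintype.card_prod, Nat.cast_mul]
      ring)
  exact prob_three_not_linearIndepOn_le (F := F) (V := V) hS hT hU hST hSU hTU hW

theorem prob_not_isTypical_le (hk : 1 ≤ finrank F V) :
    prob (fun v : ι → V => ¬ IsTypical F (finrank F V) v) ≤
      2 * finrank F V * (Fintype.card (Finset ι) ^ 2 + Fintype.card (Finset ι) ^ 3) *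
        invCard F ^ 3 := by
  refine (prob_mono fun v hv => ?_).trans ((prob_or_le _ _).trans ((add_le_add
    (prob_exists_pair_not_linearIndepOn_le F V ι)
    (prob_exists_triple_not_linearIndepOn_le F V ι)).trans_eq (by ring)))
  by_contra! ⟨hpairs, htriples⟩
  simp only [Prod.forall] at hpairs htriples
  refine hv ⟨fun R hR S hS => ?_, fun hpred S hS T hT U hU hST hSU hTU => ?_⟩
  · rw [mem_dependentSets] at hR hS
    by_contra hRS
    exact hR.2 (hpairs S R ⟨hS.1, by omega, hRS⟩ hS.2)
  · rw [mem_dependentSets] at hS hT hU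
    by_contra! hW
    exact hU.2 (htriples S T U ⟨⟨hS.1, hT.1, hU.1⟩, ⟨hST, hSU, hTU⟩, hW⟩
      (fun R hR => linearIndepOn_of_dependentSets_eq_empty hpred (by omega)) hS.2 hT.2)

end Probability

end DependentSets

section Expansion

open Asymptotics Filter Topology

variable {α : Type*} {l : Filter α} {t f g : α → ℝ} {a b a' b' : ℝ}

theorem isBigO_sum_sub {κ : Type*} (s : Finset κ) {f : κ → α → ℝ} {h : α → ℝ}
    (hf : ∀ a ∈ s, (fun x => f a x - g x) =O[l] h) :
    (fun x => ∑ a ∈ s, f a x - #s * g x) =O[l] h :=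
  (IsBigO.fun_sum hf).congr_left fun x => by rw [sum_sub_distrib, sum_const, nsmul_eq_mul]

theorem isBigO_of_abs_le {C : ℝ} (hg : ∀ x, 0 ≤ g x) (h : ∀ x, |f x| ≤ C * g x) :
    f =O[l] g :=
  .of_bound C (.of_forall fun x => by
    rw [Real.norm_eq_abs, Real.norm_of_nonneg (hg x)]
    exact h x)

/-- The second-order expansion `f = 1 + a t + b t² + O(t³)` along `l`, for a parameter `t` that
tends to `0` along `l`. -/
def HasExpansion (l : Filter α) (t f : α → ℝ) (a b : ℝ) : Prop :=
  (fun x => f x - (1 + a * t x + b * t x ^ 2)) =O[l] fun x => t x ^ 3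

namespace HasExpansion

theorem add_isBigO (hf : HasExpansion l t f a b) (hg : g =O[l] fun x => t x ^ 3) :
    HasExpansion l t (fun x => f x + g x) a b :=
  (hf.add hg).congr_left fun x => by ring

theorem tendsto_one (ht : Tendsto t l (𝓝 0)) (hf : HasExpansion l t f a b) :
    Tendsto f l (𝓝 1) := by
  have herror : Tendsto (fun x => t x ^ 3) l (𝓝 0) := by simpa using ht.pow 3
  have hmain : Tendsto (fun x => 1 + a * t x + b * t x ^ 2) l (𝓝 1) := by
    simpa using (tendsto_const_nhds.add (ht.const_mul a)).add ((ht.pow 2).const_mul b)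
  simpa using (hf.trans_tendsto herror).add hmain

theorem mul (ht : Tendsto t l (𝓝 0)) (hf : HasExpansion l t f a b)
    (hg : HasExpansion l t g a' b') :
    HasExpansion l t (fun x => f x * g x) (a + a') (b + a * a' + b') := by
  have hcubic : (fun x => (a * b' + b * a' + b * b' * t x) * t x ^ 3) =O[l] fun x => t x ^ 3 := by
    have hbdd : (fun x => a * b' + b * a' + b * b' * t x) =O[l] fun _ => (1 : ℝ) :=
      (tendsto_const_nhds.add (ht.const_mul _)).isBigO_one ℝ
    simpa using hbdd.mul (isBigO_refl (fun x => t x ^ 3) l)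
  have hleft : (fun x => (f x - (1 + a * t x + b * t x ^ 2)) * g x) =O[l] fun x => t x ^ 3 := by
    simpa using IsBigO.mul hf ((hg.tendsto_one ht).isBigO_one ℝ)
  have hright : (fun x => (1 + a * t x + b * t x ^ 2) * (g x - (1 + a' * t x + b' * t x ^ 2)))
      =O[l] fun x => t x ^ 3 := by
    have hmain : Tendsto (fun x => 1 + a * t x + b * t x ^ 2) l (𝓝 (1 + a * 0 + b * 0 ^ 2)) :=
      (tendsto_const_nhds.add (ht.const_mul a)).add ((ht.pow 2).const_mul b)
    simpa using IsBigO.mul (hmain.isBigO_one ℝ) hg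
  exact ((hleft.add hright).add hcubic).congr_left fun x => by ring

theorem of_eq (h : ∀ x, f x = 1 + a * t x + b * t x ^ 2) : HasExpansion l t f a b :=
  (isBigO_zero _ l).congr_left fun x => by rw [h, sub_self]

theorem pow (ht : Tendsto t l (𝓝 0)) (hf : HasExpansion l t f a b) (m : ℕ) :
    HasExpansion l t (fun x => f x ^ m) (m * a) (m * b + m * (m - 1) / 2 * a ^ 2) := by
  induction m with
  | zero => exact of_eq fun x => by simp
  | succ m ih =>
    convert ih.mul ht hf using 1
    · simp only [pow_succ]
    · push_cast
      ring
    · push_cast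
      ring

theorem div (ht : Tendsto t l (𝓝 0)) (hf : HasExpansion l t f a b)
    (hg : HasExpansion l t g a' b') :
    HasExpansion l t (fun x => f x / g x) (a - a') (b - b' - a' * (a - a')) := by
  set e : α → ℝ := fun x => 1 + (a - a') * t x + (b - b' - a' * (a - a')) * t x ^ 2 with he
  have hge := hg.mul ht (of_eq (f := e) fun _ => rfl)
  have hone := hg.tendsto_one ht
  have hinv : (fun x => (g x)⁻¹) =O[l] fun _ => (1 : ℝ) :=
    (hone.inv₀ one_ne_zero).isBigO_one ℝ
  have hdiff : (fun x => f x - g x * e x) =O[l] fun x => t x ^ 3 :=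
    (IsBigO.sub hf hge).congr_left fun x => by ring
  refine IsBigO.congr' (hdiff.mul hinv) ?_ (.of_forall fun x => mul_one _)
  filter_upwards [hone.eventually_ne one_ne_zero] with x hx
  simp only [he]
  field_simp

end HasExpansion

end Expansion

section ExpectEstimate

variable {F V ι : Type*} [Field F] [AddCommGroup V] [Module F V] [Fintype V]
variable [Fintype ι] [DecidableEq ι]

variable (F V) in
theorem expect_secondOrderEstimate (ι : Type*) [Fintype ι] [DecidableEq ι] (k : ℕ) :
    𝔼 v : ι → V, secondOrderEstimate k (dependentSets F (k - 1) v) (dependentSets F k v) =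
      1 - ∑ S ∈ powersetCard k (univ : Finset ι),
        prob (fun v : ι → V => ¬ LinearIndepOn F v S) +
      ((Fintype.card ι : ℝ) - k) * ∑ R ∈ powersetCard (k - 1) (univ : Finset ι),
        prob (fun v : ι → V => ¬ LinearIndepOn F v R) +
      k * ∑ W ∈ powersetCard (k + 1) (univ : Finset ι),
        prob (fun v : ι → V => ∀ S ∈ powersetCard k W, ¬ LinearIndepOn F v S) +
      (∑ p ∈ farPairs k (powersetCard k (univ : Finset ι)),
        prob fun v : ι → V => ¬ LinearIndepOn F v p.1 ∧ ¬ LinearIndepOn F v p.2) / 2 := by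
  classical
  have hfilled : ∀ v : ι → V, filledSets k (dependentSets F k v) =
      {W ∈ powersetCard (k + 1) (univ : Finset ι) |
        ∀ S ∈ powersetCard k W, ¬ LinearIndepOn F v S} :=
    fun v => filter_congr fun W _ => forall₂_congr fun S hS => by
      rw [mem_dependentSets, and_iff_right (mem_powersetCard.1 hS).2]
  have hfar : ∀ v : ι → V, farPairs k (dependentSets F k v) =
      {p ∈ farPairs k (powersetCard k (univ : Finset ι)) |
        ¬ LinearIndepOn F v ↑p.1 ∧ ¬ LinearIndepOn F v ↑p.2} := fun v => by
    ext p
    simp only [farPairs, mem_filter, mem_product, mem_dependentSets, mem_powersetCard_univ]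
    tauto
  simp only [secondOrderEstimate, hfilled, hfar]
  simp only [expect_add_distrib, expect_sub_distrib, ← mul_expect, ← expect_div, dependentSets,
    ← expect_card_filter, Fintype.expect_const]

end ExpectEstimate

section ProbabilityExpansions

open Asymptotics Filter Topology

variable {α ι : Type*} [Fintype ι] [DecidableEq ι] {F V : α → Type*} [∀ x, Field (F x)]
  [∀ x, Fintype (F x)] [∀ x, AddCommGroup (V x)] [∀ x, Module (F x) (V x)] [∀ x, Fintype (V x)]
  {k : ℕ}

theorem isBigO_prob_not_linearIndepOn_sub (l : Filter α) (hV : ∀ x, finrank (F x) (V x) = k)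
    {S : Finset ι} (hne : S.Nonempty) {d : ℕ} (hS : #S + d = k + 1) (hd : 1 ≤ d) :
    (fun x => prob (fun v : ι → V x => ¬ LinearIndepOn (F x) v S) - invCard (F x) ^ d) =O[l]
      fun x => invCard (F x) ^ (d + 1) :=
  isBigO_of_abs_le (C := 2 * k) (fun x => pow_nonneg invCard_pos.le _) fun x => by
    rw [← hV x] at hS ⊢
    exact abs_prob_not_linearIndepOn_sub_le hne hS hd

theorem isBigO_prob_not_linearIndepOn_sub_add_sq (l : Filter α)
    (hV : ∀ x, finrank (F x) (V x) = k) (hk : 2 ≤ k) {S : Finset ι} (hS : #S = k) :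
    (fun x => prob (fun v : ι → V x => ¬ LinearIndepOn (F x) v S) -
      (invCard (F x) + invCard (F x) ^ 2)) =O[l] fun x => invCard (F x) ^ 3 :=
  isBigO_of_abs_le (C := 2 * k + 1) (fun x => pow_nonneg invCard_pos.le _) fun x => by
    rw [← hV x] at hS hk ⊢
    exact abs_prob_not_linearIndepOn_sub_add_sq_le hS hk

theorem isBigO_prob_forall_not_linearIndepOn_sub (l : Filter α)
    (hV : ∀ x, finrank (F x) (V x) = k) (hk : 2 ≤ k) {W : Finset ι} (hW : #W = k + 1) :
    (fun x => prob (fun v : ι → V x => ∀ S ∈ powersetCard k W, ¬ LinearIndepOn (F x) v S) -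
      invCard (F x) ^ 2) =O[l] fun x => invCard (F x) ^ 3 :=
  isBigO_of_abs_le (C := 3 * k) (fun x => pow_nonneg invCard_pos.le _) fun x => by
    have h := abs_prob_forall_not_linearIndepOn_sub_le (F := F x) (V := V x) (W := W)
    rw [hV x] at h
    exact h hW hk

theorem isBigO_prob_not_and_not_linearIndepOn_sub (l : Filter α)
    (hV : ∀ x, finrank (F x) (V x) = k) {S T : Finset ι} (hS : #S = k) (hT : #T = k)
    (hST : #(S ∩ T) + 2 ≤ k) :
    (fun x => prob (fun v : ι → V x => ¬ LinearIndepOn (F x) v S ∧ ¬ LinearIndepOn (F x) v T) -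
      invCard (F x) ^ 2) =O[l] fun x => invCard (F x) ^ 3 :=
  isBigO_of_abs_le (C := 6 * k) (fun x => pow_nonneg invCard_pos.le _) fun x => by
    rw [← hV x] at hS hT hST ⊢
    exact abs_prob_not_and_not_linearIndepOn_sub_le hS hT hST

variable (ι) in
theorem hasExpansion_expect_secondOrderEstimate (l : Filter α)
    (hV : ∀ x, finrank (F x) (V x) = k) (hk : 2 ≤ k) :
    HasExpansion l (fun x => invCard (F x))
      (fun x => 𝔼 v : ι → V x, secondOrderEstimate k (dependentSets (F x) (k - 1) v)
        (dependentSets (F x) k v))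
      (-(Fintype.card ι).choose k)
      (-(Fintype.card ι).choose k +
        ((Fintype.card ι : ℝ) - k) * (Fintype.card ι).choose (k - 1) +
        k * (Fintype.card ι).choose (k + 1) +
        #(farPairs k (powersetCard k (univ : Finset ι))) / 2) := by
  have hk_sets := isBigO_sum_sub (powersetCard k univ) fun (S : Finset ι) hS =>
    isBigO_prob_not_linearIndepOn_sub_add_sq (V := V) l hV hk (mem_powersetCard.1 hS).2
  have hpred_sets := isBigO_sum_sub (powersetCard (k - 1) univ) fun (R : Finset ι) hR =>
    have hcard : #R = k - 1 := (mem_powersetCard.1 hR).2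
    isBigO_prob_not_linearIndepOn_sub (V := V) l hV (card_pos.1 (hcard ▸ by omega))
      (by omega : #R + 2 = k + 1) one_le_two
  have hsucc_sets := isBigO_sum_sub (powersetCard (k + 1) univ) fun (W : Finset ι) hW =>
    isBigO_prob_forall_not_linearIndepOn_sub (V := V) l hV hk (mem_powersetCard.1 hW).2
  have hfar := isBigO_sum_sub (farPairs k (powersetCard k (univ : Finset ι))) fun p hp => by
    simp only [farPairs, mem_filter, mem_product, mem_powersetCard_univ] at hp
    exact isBigO_prob_not_and_not_linearIndepOn_sub (V := V) l hV hp.1.1 hp.1.2 hp.2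
  refine ((((hpred_sets.const_mul_left ((Fintype.card ι : ℝ) - k)).sub hk_sets).add
    (hsucc_sets.const_mul_left k)).add (hfar.const_mul_left (1 / 2))).congr_left fun x => ?_
  simp only [expect_secondOrderEstimate, card_powersetCard, card_univ]
  ring

variable (ι) in
theorem hasExpansion_prob_dependentSets_eq_empty (l : Filter α)
    (hV : ∀ x, finrank (F x) (V x) = k) (hk : 2 ≤ k) (hn : k < Fintype.card ι) :
    HasExpansion l (fun x => invCard (F x))
      (fun x => prob fun v : ι → V x => dependentSets (F x) k v = ∅)
      (-(Fintype.card ι).choose k)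
      (-(Fintype.card ι).choose k +
        ((Fintype.card ι : ℝ) - k) * (Fintype.card ι).choose (k - 1) +
        k * (Fintype.card ι).choose (k + 1) +
        #(farPairs k (powersetCard k (univ : Finset ι))) / 2) := by
  obtain ⟨K, hK⟩ := exists_abs_secondOrderEstimate_le ι k
  have hK0 : 0 ≤ K := (abs_nonneg _).trans (hK ∅ ∅)
  have herror : (fun x => prob (fun v : ι → V x => dependentSets (F x) k v = ∅) -
      𝔼 v : ι → V x, secondOrderEstimate k (dependentSets (F x) (k - 1) v)
        (dependentSets (F x) k v)) =O[l] fun x => invCard (F x) ^ 3 :=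
    isBigO_of_abs_le (C := K * (2 * k * (Fintype.card (Finset ι) ^ 2 +
      Fintype.card (Finset ι) ^ 3))) (fun x => pow_nonneg invCard_pos.le 3) fun x => by
        have htyp := prob_not_isTypical_le (F x) (V x) ι
        have hest := abs_prob_sub_expect_secondOrderEstimate_le (F := F x) (V := V x) (ι := ι)
          (K := K)
        rw [hV x] at htyp hest
        refine (hest hk hn hK).trans ?_
        rw [mul_assoc]
        exact mul_le_mul_of_nonneg_left (htyp (by omega)) hK0
  have h := (hasExpansion_expect_secondOrderEstimate (V := V) ι l hV hk).add_isBigO herror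
  simpa only [add_sub_cancel] using h

end ProbabilityExpansions

section Lifts

variable {F V ι : Type*} [Field F] [AddCommGroup V] [Module F V]

theorem card_lifts_eq [Finite ι] (p : (ι → ℙ F V) → Prop) :
    Nat.card {v : ι → V // ∃ hv : ∀ i, v i ≠ 0, p fun i => .mk F (v i) (hv i)} =
      Nat.card {σ // p σ} * (Nat.card F - 1) ^ Nat.card ι := by
  let split : (ι → {x : V // x ≠ 0}) ≃ (ι → ℙ F V) × (ι → Fˣ) :=
    (Equiv.piCongrRight fun _ => Projectivization.nonZeroEquivProjectivizationProdUnits F V).trans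
      (Equiv.arrowProdEquivProdArrow _ _ _)
  let nonzero : {v : ι → V // ∃ hv : ∀ i, v i ≠ 0, p fun i => .mk F (v i) (hv i)} ≃
      {w : ι → {x : V // x ≠ 0} // p (split w).1} :=
    { toFun := fun v => ⟨fun i => ⟨v.1 i, v.2.1 i⟩, v.2.2⟩
      invFun := fun w => ⟨fun i => (w.1 i).1, fun i => (w.1 i).2, w.2⟩ }
  rw [Nat.card_congr ((nonzero.trans (split.subtypeEquiv fun _ => Iff.rfl)).trans
    (Equiv.prodSubtypeFstEquivSubtypeProd (p := p))), Nat.card_prod, Nat.card_fun, Nat.card_units]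

theorem iSup_submodule_mk {v : ι → V} (hv : ∀ i, v i ≠ 0) (S : Finset ι) :
    ⨆ i ∈ S, (Projectivization.mk F (v i) (hv i)).submodule = Submodule.span F (v '' S) := by
  simp only [Projectivization.submodule_mk]
  rw [Submodule.span_eq_iSup_of_singleton_spans, iSup_image]
  rfl

theorem mk_ne_mk_of_linearIndepOn {v : ι → V} (hv : ∀ i, v i ≠ 0) {S : Finset ι}
    (h : LinearIndepOn F v S) {i j : ι} (hi : i ∈ S) (hj : j ∈ S) (hij : i ≠ j) :
    Projectivization.mk F (v i) (hv i) ≠ .mk F (v j) (hv j) := by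
  classical
  rw [Ne, Projectivization.mk_eq_mk_iff']
  rintro ⟨a, ha⟩
  refine ((linearIndepOn_iff_erase hi v).1 h).2 (ha ▸ Submodule.smul_mem _ a ?_)
  exact mem_span_image v (mem_erase.2 ⟨hij.symm, hj⟩)

end Lifts

section Arcs

variable {F : Type} [Field F] {n k : ℕ}

theorem dependentSets_eq_empty_iff_isArc (hk : 2 ≤ k) (hkn : k ≤ n) (v : Fin n → Fin k → F) :
    dependentSets F k v = ∅ ↔ ∃ hv : ∀ i, v i ≠ 0, IsArc F n k fun i => .mk F (v i) (hv i) := by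
  rw [dependentSets_eq_empty_iff]
  constructor
  · intro h
    have hset : ∀ i j, ∃ S : Finset (Fin n), i ∈ S ∧ j ∈ S ∧ LinearIndepOn F v S := fun i j => by
      obtain ⟨S, hS, -, hcard⟩ := exists_subsuperset_card_eq (subset_univ {i, j})
        (card_le_two.trans hk) (by rwa [card_fin])
      exact ⟨S, hS (by simp), hS (by simp), h S hcard⟩
    have hv : ∀ i, v i ≠ 0 := fun i => by
      obtain ⟨S, hi, -, hS⟩ := hset i i
      exact hS.ne_zero hi
    refine ⟨hv, fun i j hij => ?_, fun S hS => ?_⟩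
    · obtain ⟨S, hi, hj, hS⟩ := hset i j
      exact not_imp_not.1 (mk_ne_mk_of_linearIndepOn hv hS hi hj) hij
    · rw [iSup_submodule_mk hv, finrank_span_image (h S hS), hS]
  · rintro ⟨hv, -, h⟩ S hS
    rw [linearIndepOn_iff_finrank_span_image, ← iSup_submodule_mk hv, h S hS, hS]

variable [Fintype F]

variable (F) in
/-- The quotient `C_{n,k}(q) / |PGL_k(F_q)|`, the number of projective classes of ordered
`n`-arcs; the order of `PGL_k(F_q)` is written as `|GL_k(F_q)| / (q - 1)`. -/
noncomputable def arcClassCount (n k : ℕ) : ℝ :=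
  (Nat.card {σ : Fin n → ℙ F (Fin k → F) // IsArc F n k σ} : ℝ) /
    ((Nat.card (GL (Fin k) F) / (Fintype.card F - 1) : ℕ) : ℝ)

theorem card_isArc_mul (hk : 2 ≤ k) (hkn : k ≤ n) :
    (Nat.card {σ : Fin n → ℙ F (Fin k → F) // IsArc F n k σ} : ℝ) *
        ((Fintype.card F - 1 : ℕ) : ℝ) ^ n =
      prob (fun v : Fin n → Fin k → F => dependentSets F k v = ∅) *
        (Fintype.card F : ℝ) ^ (k * n) := by
  have h := card_lifts_eq (IsArc F n k)
  rw [Nat.card_fin, Nat.card_eq_fintype_card (α := F)] at h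
  simp only [prob_eq_card_div, dependentSets_eq_empty_iff_isArc hk hkn]
  rw [h]
  simp only [Nat.card_fun, Nat.card_fin, Nat.card_eq_fintype_card (α := F), ← pow_mul]
  push_cast
  field_simp

theorem card_GL_eq (k : ℕ) :
    (Nat.card (GL (Fin k) F) : ℝ) =
      prob (fun v : Fin k → Fin k → F => LinearIndependent F v) *
        (Fintype.card F : ℝ) ^ (k * k) := by
  rw [prob_eq_card_div, Nat.card_congr (Matrix.equiv_GL_linearindependent k)]
  simp only [Nat.card_fun, Nat.card_fin, Nat.card_eq_fintype_card (α := F), ← pow_mul]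
  push_cast
  field_simp

theorem card_sub_one_dvd_card_GL (hk : 1 ≤ k) :
    Fintype.card F - 1 ∣ Nat.card (GL (Fin k) F) := by
  rw [Matrix.card_GL_field]
  refine dvd_trans ?_ (dvd_prod_of_mem _ (mem_univ (⟨0, hk⟩ : Fin k)))
  simpa using Nat.sub_dvd_pow_sub_pow (Fintype.card F) 1 k

theorem invCard_zpow_mul_arcClassCount (hk : 2 ≤ k) (hkn : k ≤ n) :
    invCard F ^ ((k * (n - k) : ℕ) - n + 1 : ℤ) * arcClassCount F n k =
      prob (fun v : Fin n → Fin k → F => dependentSets F k v = ∅) /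
        (prob (fun v : Fin k → Fin k → F => LinearIndependent F v) *
          (1 - invCard F) ^ (n - 1)) := by
  have harcs := card_isArc_mul (F := F) hk hkn
  have hdvd := card_sub_one_dvd_card_GL (F := F) (one_le_two.trans hk)
  have hGL_pos : (0 : ℝ) < Nat.card (GL (Fin k) F) := by exact_mod_cast Nat.card_pos
  rw [card_GL_eq] at hGL_pos
  have hcard : 1 < Fintype.card F := Fintype.one_lt_card
  have hq : (1 : ℝ) < Fintype.card F := by exact_mod_cast hcard
  have hcast : ((Fintype.card F - 1 : ℕ) : ℝ) = Fintype.card F - 1 := by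
    rw [Nat.cast_sub hcard.le, Nat.cast_one]
  obtain ⟨m, rfl⟩ : ∃ m, n = m + 1 := ⟨n - 1, by omega⟩
  rw [arcClassCount, Nat.cast_div hdvd (by rw [hcast]; linarith), card_GL_eq, hcast, invCard]
  rw [hcast] at harcs
  generalize (Fintype.card F : ℝ) = q at *
  generalize prob (fun v : Fin k → Fin k → F => LinearIndependent F v) = g at *
  have hq0 : q ≠ 0 := by positivity
  have hq1 : q - 1 ≠ 0 := by linarith
  have hg : g ≠ 0 := by rintro rfl; simp at hGL_pos
  have hpow : q⁻¹ ^ ((k * (m + 1 - k) : ℕ) - (m + 1 : ℕ) + 1 : ℤ) =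
      q ^ m * q ^ (k * k) / q ^ (k * (m + 1)) := by
    rw [eq_div_iff (pow_ne_zero _ hq0), inv_zpow']
    simp only [← zpow_natCast, ← zpow_add₀ hq0]
    push_cast [Nat.cast_sub hkn]
    ring_nf
  have hinv : 1 - q⁻¹ = (q - 1) / q := by field_simp
  rw [hpow, hinv, Nat.add_sub_cancel, div_pow]
  rw [pow_succ (q - 1)] at harcs
  field_simp
  linear_combination harcs

end Arcs

section Coefficients

-- Dividing the counts by `C(n, k)` turns all of them into rational functions of `n` and `k`.
theorem secondOrder_coefficient_eq {n k : ℕ} (hk : 1 ≤ k) (hkn : k ≤ n) :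
    ((n : ℝ) - k) * n.choose (k - 1) + k * n.choose (k + 1) +
        #(farPairs k (powersetCard k (univ : Finset (Fin n)))) / 2 =
      ((n.choose k : ℝ) ^ 2 - n.choose k) / 2 -
        n.choose k * (k * (n - k : ℕ) : ℕ) * ((k * (n - k : ℕ) : ℕ) - n - 3) /
          (2 * ((k * (n - k : ℕ) : ℕ) + n + 1)) := by
  have hfar := card_farPairs_add (Fin n) hk
  have hsucc := Nat.choose_succ_right_eq n k
  have hpred := Nat.choose_succ_right_eq n (k - 1)
  rw [Fintype.card_fin] at hfar
  rw [Nat.sub_add_cancel hk] at hpred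
  obtain ⟨d, rfl⟩ := Nat.exists_eq_add_of_le hkn
  rw [show k + d - (k - 1) = d + 1 by omega] at hpred
  rw [Nat.add_sub_cancel_left] at hfar hsucc ⊢
  generalize (k + d).choose k = N at *
  have hN_pred : ((k + d).choose (k - 1) : ℝ) = N * k / (d + 1) := by
    rw [eq_div_iff (by positivity)]
    exact_mod_cast hpred.symm
  have hN_succ : ((k + d).choose (k + 1) : ℝ) = N * d / (k + 1) := by
    rw [eq_div_iff (by positivity)]
    exact_mod_cast hsucc
  have hN_far : (#(farPairs k (powersetCard k (univ : Finset (Fin (k + d))))) : ℝ) =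
      N ^ 2 - N * (k * d + 1) := by
    rw [eq_sub_iff_add_eq]
    exact_mod_cast hfar
  have hden : ((k * d : ℕ) : ℝ) + (k + d : ℕ) + 1 = (d + 1) * (k + 1) := by
    push_cast
    ring
  rw [hN_pred, hN_succ, hN_far, hden]
  push_cast
  field_simp
  ring

end Coefficients

section Asymptotics

open Asymptotics Filter Topology

/-- A finite field in `Type`, bundled so that an estimate that is uniform in the field becomes a
limit along the filter `FinField.atTop`. -/
structure FinField where
  carrier : Type
  [field : Field carrier]
  [fintype : Fintype carrier]

namespace FinField

attribute [instance] field fintype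

instance : CoeSort FinField Type := ⟨carrier⟩

/-- The filter on finite fields whose order tends to infinity. -/
def atTop : Filter FinField := comap (fun F => Fintype.card F) Filter.atTop

theorem tendsto_invCard_atTop : Tendsto (fun F : FinField => invCard F) atTop (𝓝 0) :=
  tendsto_inv_atTop_zero.comp (tendsto_natCast_atTop_atTop.comp tendsto_comap)

end FinField

theorem hasExpansion_prob_linearIndependent {α : Type*} {F V : α → Type*} [∀ x, Field (F x)]
    [∀ x, Fintype (F x)] [∀ x, AddCommGroup (V x)] [∀ x, Module (F x) (V x)]
    [∀ x, Fintype (V x)] {k : ℕ} (l : Filter α) (hV : ∀ x, finrank (F x) (V x) = k)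
    (hk : 2 ≤ k) :
    HasExpansion l (fun x => invCard (F x))
      (fun x => prob fun v : Fin k → V x => LinearIndependent (F x) v) (-1) (-1) := by
  refine (isBigO_prob_not_linearIndepOn_sub_add_sq (ι := Fin k) (V := V) l hV hk
    (card_fin k)).neg_left.congr_left fun x => ?_
  simp only [coe_univ, linearIndepOn_univ_iff, prob_not]
  ring

theorem hasExpansion_arcClassCount {n k : ℕ} (hk : 2 ≤ k) (hkn : k < n) :
    HasExpansion FinField.atTop (fun F => invCard F)
      (fun F => invCard F ^ ((k * (n - k) : ℕ) - n + 1 : ℤ) * arcClassCount F n k)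
      (-((n.choose k : ℝ) - n))
      (((n.choose k : ℝ) ^ 2 - 5 * n.choose k + 4) / 2 -
        n.choose k * (k * (n - k : ℕ) : ℕ) * ((k * (n - k : ℕ) : ℕ) - n - 3) /
          (2 * ((k * (n - k : ℕ) : ℕ) + n + 1)) -
        ((n : ℝ) - 1) * (n.choose k - n) - ((n : ℝ) ^ 2 - 3 * n + 2) / 2) := by
  have ht := FinField.tendsto_invCard_atTop
  have hV : ∀ F : FinField, finrank F (Fin k → F) = k := fun F => by simp
  have harcs := hasExpansion_prob_dependentSets_eq_empty (Fin n) FinField.atTop hV hk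
    (by rwa [Fintype.card_fin])
  have hGL := hasExpansion_prob_linearIndependent FinField.atTop hV hk
  have hunits : HasExpansion FinField.atTop (fun F => invCard F)
      (fun F => (1 - invCard F) ^ (n - 1)) _ _ :=
    (HasExpansion.of_eq (a := -1) (b := 0) fun F => by ring).pow ht (n - 1)
  have hcoeff := secondOrder_coefficient_eq (one_le_two.trans hk) hkn.le
  convert harcs.div ht (hGL.mul ht hunits) using 1
  · exact funext fun F => invCard_zpow_mul_arcClassCount hk hkn.le
  · rw [Fintype.card_fin, Nat.cast_sub (by omega)]
    ring
  · rw [Fintype.card_fin, Nat.cast_sub (by omega)]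
    linear_combination -hcoeff

theorem abs_sub_zpow_le_of_abs_zpow_mul_sub_le {q A a b c : ℝ} (hq : 0 < q) {m : ℤ}
    (h : |q⁻¹ ^ (m + 1) * A - (1 + -a * q⁻¹ + b * q⁻¹ ^ 2)| ≤ c * q⁻¹ ^ 3) :
    |A - (q ^ (m + 1) - a * q ^ m + b * q ^ (m - 1))| ≤ c * q ^ (m - 2) := by
  have hscale : 0 < q ^ (m + 1) := zpow_pos hq _
  have hleft : A - (q ^ (m + 1) - a * q ^ m + b * q ^ (m - 1)) =
      q ^ (m + 1) * (q⁻¹ ^ (m + 1) * A - (1 + -a * q⁻¹ + b * q⁻¹ ^ 2)) := by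
    rw [inv_zpow, zpow_add_one₀ hq.ne', zpow_sub_one₀ hq.ne']
    field_simp
    ring
  have hright : c * q ^ (m - 2) = q ^ (m + 1) * (c * q⁻¹ ^ 3) := by
    rw [zpow_add_one₀ hq.ne', zpow_sub₀ hq.ne', zpow_ofNat]
    field_simp
  rw [hleft, hright, abs_mul, abs_of_pos hscale]
  exact mul_le_mul_of_nonneg_left h hscale.le

end Asymptotics

end Kaipa

/-- Kaipa's asymptotic: with `δ = k(n-k)`, `N = C(n,k)` and
`b₂ = (N²-5N+4)/2 - Nδ(δ-n-3)/(2(δ+n+1)) - (n-1)(N-n) - (n²-3n+2)/2`, the number of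
`PGL_k(F_q)`-classes of `n`-arcs, i.e. `C_{n,k}(q)/|PGL_k(F_q)|`, equals
`q^{δ-n+1} - (N-n) q^{δ-n} + b₂ q^{δ-n-1} + O(q^{δ-n-2})` as the prime power `q → ∞`. -/
theorem kaipa_asymptotic (n k : ℕ) (hk : 2 ≤ k) (hnk : k < n) :
    ∃ (c : ℝ) (Q₀ : ℕ),
      ∀ (F : Type) [Field F] [Fintype F] [DecidableEq F],
        Q₀ ≤ Fintype.card F →
        (let q : ℝ := (Fintype.card F : ℝ)
         let δ : ℕ := k * (n - k)
         let N : ℕ := n.choose k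
         let b₂ : ℝ := ((N : ℝ) ^ 2 - 5 * N + 4) / 2
            - ((N : ℝ) * δ * ((δ : ℝ) - n - 3)) / (2 * ((δ : ℝ) + n + 1))
            - ((n : ℝ) - 1) * ((N : ℝ) - n) - ((n : ℝ) ^ 2 - 3 * n + 2) / 2
         |(Nat.card {σ : Fin n → ℙ F (Fin k → F) // IsArc F n k σ} : ℝ) /
              ((Nat.card (GL (Fin k) F) / (Fintype.card F - 1) : ℕ) : ℝ)
            - (q ^ ((δ : ℤ) - n + 1) - ((N : ℝ) - n) * q ^ ((δ : ℤ) - n)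
                + b₂ * q ^ ((δ : ℤ) - n - 1))|
          ≤ c * q ^ ((δ : ℤ) - n - 2)) := by
  obtain ⟨c, hc⟩ := (Kaipa.hasExpansion_arcClassCount hk hnk).bound
  obtain ⟨Q₀, hQ₀⟩ := Filter.eventually_atTop.1 (Filter.eventually_comap.1 hc)
  refine ⟨c, Q₀, fun F _ _ _ hF => ?_⟩
  have hq : (0 : ℝ) < Fintype.card F := by exact_mod_cast Fintype.card_pos
  have h := hQ₀ _ hF ⟨F⟩ rfl
  rw [Real.norm_eq_abs, Real.norm_of_nonneg (pow_nonneg Kaipa.invCard_pos.le 3)] at h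
  exact Kaipa.abs_sub_zpow_le_of_abs_zpow_mul_sub_le hq h
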